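/- arXiv:2305.11925 — 8 statements merged into one kernel-verified Lean document; each statement's English description precedes it below -/
import Mathlib

section
/- Let (X,d) be a b-rectangular metric space with coefficient s ≥ 1. Let y ∈ X and let (x_n) be a Cauchy sequence in X with x_n ≠ x_m for all m ≠ n, converging to a point x with x ≠ y. Then (1/s)·d(x,y) ≤ liminf_{n→∞} d(x_n,y) ≤ limsup_{n→∞} d(x_n,y) ≤ s·d(x,y). -/
/-!
Write `e n = d (x n) (x (n+1)) + d (x (n+1)) a`. This tends to `0`, because the sequence is Cauchy
and converges to `a`. Since the terms are pairwise distinct, `x n` and `x (n+1)` eventually avoid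
both `a` and `y`, so the rectangular inequality applies to the two paths
`x n → x (n+1) → a → y` and `a → x (n+1) → x n → y`, giving eventually
`(1/s) * d a y - e n ≤ d (x n) y ≤ s * (d a y + e n)`.
Both outer sequences converge, and passing to the liminf and limsup gives the claim.
-/

open Filter Topology

/-- A b-rectangular metric space with coefficient `s`. -/
structure RectBMetric (X : Type*) (s : ℝ) where
  d : X → X → ℝ
  nonneg : ∀ x y, 0 ≤ d x y
  eq_iff : ∀ x y, d x y = 0 ↔ x = y
  symm : ∀ x y, d x y = d y x
  rect : ∀ x y u v : X, u ≠ v → u ≠ x → u ≠ y → v ≠ x → v ≠ y →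
    d x y ≤ s * (d x u + d u v + d v y)

namespace RectBMetric

variable {X : Type*} {s : ℝ}

/-- Convergence of a sequence in a b-rectangular metric space. -/
def TendstoSeq (B : RectBMetric X s) (x : ℕ → X) (l : X) : Prop :=
  Filter.Tendsto (fun n => B.d (x n) l) Filter.atTop (nhds 0)

/-- Cauchy sequences in a b-rectangular metric space. -/
def IsCauchySeq (B : RectBMetric X s) (x : ℕ → X) : Prop :=
  ∀ ε : ℝ, 0 < ε → ∃ N : ℕ, ∀ m ≥ N, ∀ n ≥ N, B.d (x m) (x n) < ε

/-- Completeness of a b-rectangular metric space. -/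
def Complete (B : RectBMetric X s) : Prop :=
  ∀ x : ℕ → X, B.IsCauchySeq x → ∃ l, B.TendstoSeq x l

/-- Lower semicontinuity of `φ : X → ℝ` with respect to a b-rectangular metric. -/
def LSC (B : RectBMetric X s) (φ : X → ℝ) : Prop :=
  ∀ (x : ℕ → X) (l : X), B.TendstoSeq x l →
    φ l ≤ Filter.liminf (fun n => φ (x n)) Filter.atTop

/-- The quantity `M(x,y,d,T,φ)`. -/
def Mfun (B : RectBMetric X s) (T : X → X) (φ : X → ℝ) (x y : X) : ℝ :=
  max (B.d x y + φ x + φ y)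
    (max (B.d x (T x) + φ x + φ (T x)) (B.d y (T y) + φ y + φ (T y)))

end RectBMetric

/-- An altering distance function on `[0,∞)`. -/
def AlteringDistance (ψ : ℝ → ℝ) : Prop :=
  ContinuousOn ψ (Set.Ici 0) ∧ MonotoneOn ψ (Set.Ici 0) ∧
    (∀ t ≥ (0:ℝ), 0 ≤ ψ t) ∧ (∀ t ≥ (0:ℝ), (ψ t = 0 ↔ t = 0))

/-- The class `Φᵤ`: continuous `ϕ : [0,∞) → [0,∞)` with `ϕ(t) > 0` for `t > 0`, `ϕ(0) ≥ 0`. -/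
def PhiU (ϕ : ℝ → ℝ) : Prop :=
  ContinuousOn ϕ (Set.Ici 0) ∧ (∀ t : ℝ, 0 < t → 0 < ϕ t) ∧ 0 ≤ ϕ 0

/-- C-class functions. -/
def CClass (F : ℝ → ℝ → ℝ) : Prop :=
  ContinuousOn (fun p : ℝ × ℝ => F p.1 p.2) (Set.Ici 0 ×ˢ Set.Ici 0) ∧
    (∀ a b : ℝ, 0 ≤ a → 0 ≤ b → F a b ≤ a) ∧
    (∀ a b : ℝ, 0 ≤ a → 0 ≤ b → F a b = a → a = 0 ∨ b = 0)

/-- An injective sequence eventually avoids any given point. -/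
theorem eventually_ne_of_pairwise_ne {X : Type*} {x : ℕ → X}
    (hinj : ∀ m n : ℕ, m ≠ n → x m ≠ x n) (p : X) : ∀ᶠ n in atTop, x n ≠ p := by
  by_cases h : ∃ k, x k = p
  · obtain ⟨k, rfl⟩ := h
    filter_upwards [eventually_gt_atTop k] with n hn
    exact hinj n k hn.ne'
  · exact Eventually.of_forall fun n hn => h ⟨n, hn⟩

theorem stmt1 {X : Type*} [Nonempty X] {s : ℝ} (hs : 1 ≤ s) (B : RectBMetric X s)
    (x : ℕ → X) (a y : X)
    (hC : B.IsCauchySeq x) (hinj : ∀ m n : ℕ, m ≠ n → x m ≠ x n)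
    (hconv : B.TendstoSeq x a) (hay : a ≠ y) :
    (1 / s) * B.d a y ≤ Filter.liminf (fun n => B.d (x n) y) Filter.atTop ∧
      Filter.liminf (fun n => B.d (x n) y) Filter.atTop ≤
        Filter.limsup (fun n => B.d (x n) y) Filter.atTop ∧
      Filter.limsup (fun n => B.d (x n) y) Filter.atTop ≤ s * B.d a y := by
  have hs0 : 0 < s := by linarith
  have hstep : Tendsto (fun n => B.d (x n) (x (n + 1))) atTop (𝓝 0) := by
    rw [Metric.tendsto_atTop]
    intro ε hε
    obtain ⟨N, hN⟩ := hC ε hε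
    refine ⟨N, fun n hn => ?_⟩
    rw [Real.dist_eq, sub_zero, abs_of_nonneg (B.nonneg _ _)]
    exact hN n hn (n + 1) (by omega)
  have hsucc : Tendsto (fun n => B.d (x (n + 1)) a) atTop (𝓝 0) :=
    Tendsto.comp hconv (tendsto_add_atTop_nat 1)
  have he : Tendsto (fun n => B.d (x n) (x (n + 1)) + B.d (x (n + 1)) a) atTop (𝓝 0) := by
    simpa using hstep.add hsucc
  have hlo : Tendsto (fun n => (1 / s) * B.d a y
      - (B.d (x n) (x (n + 1)) + B.d (x (n + 1)) a)) atTop (𝓝 ((1 / s) * B.d a y)) := by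
    simpa using tendsto_const_nhds.sub he
  have hhi : Tendsto (fun n => s * (B.d a y
      + (B.d (x n) (x (n + 1)) + B.d (x (n + 1)) a))) atTop (𝓝 (s * B.d a y)) := by
    simpa using (tendsto_const_nhds.add he).const_mul s
  have hne : ∀ p, ∀ᶠ n in atTop, x n ≠ p ∧ x (n + 1) ≠ p := fun p =>
    (eventually_ne_of_pairwise_ne hinj p).and
      ((tendsto_add_atTop_nat 1).eventually (eventually_ne_of_pairwise_ne hinj p))
  have hle_hi : ∀ᶠ n in atTop, B.d (x n) y ≤
      s * (B.d a y + (B.d (x n) (x (n + 1)) + B.d (x (n + 1)) a)) := by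
    filter_upwards [hne a, hne y] with n ha hy
    have := B.rect (x n) y (x (n + 1)) a ha.2 (hinj _ _ (by omega)) hy.2 ha.1.symm hay
    linarith
  have hlo_le : ∀ᶠ n in atTop, (1 / s) * B.d a y
      - (B.d (x n) (x (n + 1)) + B.d (x (n + 1)) a) ≤ B.d (x n) y := by
    filter_upwards [hne a, hne y] with n ha hy
    have := B.rect a y (x (n + 1)) (x n) (hinj _ _ (by omega)) ha.2 hy.2 ha.1 hy.1
    rw [B.symm a (x (n + 1)), B.symm (x (n + 1)) (x n)] at this
    have h2 : (1 / s) * B.d a y ≤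
        B.d (x (n + 1)) a + B.d (x n) (x (n + 1)) + B.d (x n) y := by
      rw [one_div, inv_mul_le_iff₀ hs0]
      exact this
    linarith
  -- Real-valued liminf and limsup are meaningful only for bounded sequences.
  have hbdd_above : IsBoundedUnder (· ≤ ·) atTop (fun n => B.d (x n) y) :=
    hhi.isBoundedUnder_le.mono_le hle_hi
  have hbdd_below : IsBoundedUnder (· ≥ ·) atTop (fun n => B.d (x n) y) :=
    hlo.isBoundedUnder_ge.mono_ge hlo_le
  refine ⟨?_, liminf_le_limsup hbdd_above hbdd_below, ?_⟩
  · rw [← hlo.liminf_eq]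
    exact liminf_le_liminf hlo_le hlo.isBoundedUnder_ge hbdd_above.isCoboundedUnder_ge
  · rw [← hhi.limsup_eq]
    exact limsup_le_limsup hle_hi hbdd_below.isCoboundedUnder_le hhi.isBoundedUnder_le
end

section
/- Let (X,d) be a complete metric space, T : X → X a mapping, and φ : X → [0,∞) a lower semicontinuous function. Suppose ψ : [0,∞) → [0,∞) is continuous with ψ(t) = 0 iff t = 0, and ϕ : [0,∞) → [0,∞) is lower semicontinuous with ϕ(t) = 0 iff t = 0, and that for all x, y ∈ X, ψ(d(Tx,Ty) + φ(Tx) + φ(Ty)) ≤ ψ(m(x,y)) − ϕ(l(x,y)), where m(x,y) = max{d(x,y)+φ(x)+φ(y), d(x,Tx)+φ(x)+φ(Tx), d(y,Ty)+φ(y)+φ(Ty), (1/2)[d(x,Ty)+φ(x)+φ(Ty)+d(y,Tx)+φ(Tx)+φ(y)]} and l(x,y) = max{d(x,y)+φ(x)+φ(y), d(y,Ty)+φ(y)+φ(Ty)}. Then there exists a unique z ∈ X such that Tz = z and φ(z) = 0. -/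
/-!
Write `D x y = d(x,y) + φ x + φ y`. This symmetric function satisfies the triangle inequality, and
the contraction reads `ψ (D (Tx) (Ty)) ≤ ψ (m x y) - ϕ (l x y)`, where `m` and `l` denote the maxima
of four and of two terms in the hypothesis. Monotonicity of `ψ` is never needed,
because at each step the arguments of `ψ` on both sides and the argument of `ϕ` converge to the same
number `r ≥ 0`; continuity and semicontinuity then give `ψ r ≤ ψ r - ϕ r`, so `r = 0`
(`limit_eq_zero`).

Along a Picard orbit `x (n+1) = T (x n)`, put `a n = D (x n) (x (n+1))`. Then
`m (x n) (x (n+1)) = max (a n) (a (n+1))`, which forces `a` to be antitone, and the principle gives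
`a → 0`; in particular `φ (x n) → 0` and consecutive distances tend to `0`. If the orbit were not
Cauchy, there would be pairs of arbitrarily late indices whose distance crosses a level `ε > 0`, and
the principle at those pairs would give `ε = 0` (`cauchySeq_of_crossing`). Let `z` be the limit.
Then `φ z = 0` by lower semicontinuity, and the principle applied to `(x n, z)` gives `D z (T z) = 0`.
Uniqueness is the principle applied to constant sequences.
-/

open Filter Topology

/-- The limiting form of the contraction: if the two arguments of `ψ` and the argument of `ϕ` tend
to a common limit, that limit is zero. -/
lemma limit_eq_zero {ψ ϕ : ℝ → ℝ}
    (hψc : ContinuousOn ψ (Set.Ici 0))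
    (hϕl : LowerSemicontinuousOn ϕ (Set.Ici 0)) (hϕ0 : ∀ t ≥ (0:ℝ), 0 ≤ ϕ t)
    (hϕz : ∀ t ≥ (0:ℝ), (ϕ t = 0 ↔ t = 0))
    {p q l : ℕ → ℝ} {r : ℝ} (hp : Tendsto p atTop (𝓝 r)) (hq : Tendsto q atTop (𝓝 r))
    (hl : Tendsto l atTop (𝓝 r)) (hp0 : ∀ n, 0 ≤ p n) (hq0 : ∀ n, 0 ≤ q n) (hl0 : ∀ n, 0 ≤ l n)
    (h : ∀ n, ψ (p n) ≤ ψ (q n) - ϕ (l n)) : r = 0 := by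
  have hr : 0 ≤ r := ge_of_tendsto' hp hp0
  have within : ∀ {u : ℕ → ℝ}, Tendsto u atTop (𝓝 r) → (∀ n, 0 ≤ u n) →
      Tendsto u atTop (𝓝[Set.Ici 0] r) := fun hu hu0 =>
    tendsto_nhdsWithin_iff.2 ⟨hu, Eventually.of_forall hu0⟩
  have hψp := (hψc r hr).tendsto.comp (within hp hp0)
  have hψq := (hψc r hr).tendsto.comp (within hq hq0)
  by_contra hne
  have hpos : 0 < ϕ r := lt_of_le_of_ne (hϕ0 r hr) fun e => hne ((hϕz r hr).1 e.symm)
  have hev : ∀ᶠ n in atTop, ϕ r / 2 < ϕ (l n) :=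
    (within hl hl0).eventually (hϕl r hr (ϕ r / 2) (by linarith))
  have := le_of_tendsto_of_tendsto hψp (hψq.sub_const (ϕ r / 2)) (by
    filter_upwards [hev] with n hn
    have := h n
    simp only [Function.comp_apply]
    linarith)
  linarith

/-- A sequence is Cauchy if no level `ε > 0` is crossed by `n ↦ dist (x m) (x n)` with both
indices arbitrarily large. -/
lemma cauchySeq_of_crossing {X : Type*} [MetricSpace X] {x : ℕ → X}
    (h : ∀ ε > 0, ∃ N, ∀ m ≥ N, ∀ n ≥ m, dist (x m) (x n) < ε → dist (x m) (x (n + 1)) < ε) :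
    CauchySeq x := by
  refine Metric.cauchySeq_iff'.2 fun ε hε => ?_
  obtain ⟨N, hN⟩ := h ε hε
  refine ⟨N, fun n hn => ?_⟩
  rw [dist_comm]
  induction n, hn using Nat.le_induction with
  | base => simpa using hε
  | succ n hn ih => exact hN N le_rfl n hn ih

theorem stmt3 {X : Type*} [Nonempty X] [MetricSpace X] [CompleteSpace X]
    (T : X → X) (φ : X → ℝ) (hφ0 : ∀ x, 0 ≤ φ x) (hφ : LowerSemicontinuous φ)
    (ψ ϕ : ℝ → ℝ)
    (hψc : ContinuousOn ψ (Set.Ici 0)) (hψ0 : ∀ t ≥ (0:ℝ), 0 ≤ ψ t)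
    (hψz : ∀ t ≥ (0:ℝ), (ψ t = 0 ↔ t = 0))
    (hϕl : LowerSemicontinuousOn ϕ (Set.Ici 0)) (hϕ0 : ∀ t ≥ (0:ℝ), 0 ≤ ϕ t)
    (hϕz : ∀ t ≥ (0:ℝ), (ϕ t = 0 ↔ t = 0))
    (hcontr : ∀ x y : X,
      ψ (dist (T x) (T y) + φ (T x) + φ (T y)) ≤
        ψ (max (max (dist x y + φ x + φ y) (dist x (T x) + φ x + φ (T x)))
            (max (dist y (T y) + φ y + φ (T y))
              ((dist x (T y) + φ x + φ (T y) + dist y (T x) + φ (T x) + φ y) / 2)))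
          - ϕ (max (dist x y + φ x + φ y) (dist y (T y) + φ y + φ (T y)))) :
    ∃! z : X, T z = z ∧ φ z = 0 := by
  have key := @limit_eq_zero ψ ϕ hψc hϕl hϕ0 hϕz
  obtain ⟨x₀⟩ := ‹Nonempty X›
  obtain ⟨x, hx⟩ : ∃ x : ℕ → X, ∀ n, T (x n) = x (n + 1) :=
    ⟨fun n => T^[n] x₀, fun n => (Function.iterate_succ_apply' T n x₀).symm⟩
  obtain ⟨a, ha⟩ : ∃ a : ℕ → ℝ, ∀ n, a n = dist (x n) (x (n + 1)) + φ (x n) + φ (x (n + 1)) :=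
    ⟨_, fun _ => rfl⟩
  have ha0 : ∀ n, 0 ≤ a n := fun n => by
    rw [ha]
    linarith [hφ0 (x n), hφ0 (x (n + 1)), dist_nonneg (x := x n) (y := x (n + 1))]
  -- On consecutive iterates the averaged term in `m` is dominated by the larger of `a n`, `a (n+1)`.
  have hstep : ∀ n, ψ (a (n + 1)) ≤ ψ (max (a n) (a (n + 1))) - ϕ (max (a n) (a (n + 1))) := by
    intro n
    have h := hcontr (x n) (x (n + 1))
    simp only [hx, ← ha, dist_self, max_self] at h
    have hle : (dist (x n) (x (n + 1 + 1)) + φ (x n) + φ (x (n + 1 + 1)) + 0 + φ (x (n + 1))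
        + φ (x (n + 1))) / 2 ≤ max (a n) (a (n + 1)) := by
      have h1 := dist_triangle (x n) (x (n + 1)) (x (n + 1 + 1))
      have h2 := ha n
      have h3 := ha (n + 1)
      have h4 := le_max_left (a n) (a (n + 1))
      have h5 := le_max_right (a n) (a (n + 1))
      linarith
    rwa [← max_assoc, max_eq_left hle] at h
  have hanti : Antitone a := antitone_nat_of_succ_le fun n => by
    by_contra! hlt
    have h := hstep n
    rw [max_eq_right hlt.le] at h
    have h1 := (hϕz _ (ha0 (n + 1))).1 (le_antisymm (by linarith) (hϕ0 _ (ha0 (n + 1))))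
    linarith [ha0 n]
  have hlim : Tendsto a atTop (𝓝 0) := by
    have hconv := tendsto_atTop_ciInf hanti ⟨0, by rintro _ ⟨n, rfl⟩; exact ha0 n⟩
    have h0 := key ((tendsto_add_atTop_iff_nat 1).2 hconv) hconv hconv
      (fun n => ha0 _) ha0 ha0 (fun n => by
        have h := hstep n
        rwa [max_eq_left (hanti n.le_succ)] at h)
    rwa [h0] at hconv
  have hφlim : Tendsto (fun n => φ (x n)) atTop (𝓝 0) :=
    squeeze_zero (fun n => hφ0 _) (fun n => by
      rw [ha]
      linarith [hφ0 (x (n + 1)), dist_nonneg (x := x n) (y := x (n + 1))]) hlim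
  have hd : ∀ n, dist (x n) (x (n + 1)) ≤ a n := fun n => by
    rw [ha]; linarith [hφ0 (x n), hφ0 (x (n + 1))]
  have hcauchy : CauchySeq x := by
    apply cauchySeq_of_crossing
    by_contra! hcon
    obtain ⟨ε, hε, hcon⟩ := hcon
    choose m hm n hn hlt hge using hcon
    have hmT : Tendsto m atTop atTop := tendsto_atTop_mono hm tendsto_id
    have hnT : Tendsto n atTop atTop := tendsto_atTop_mono hn hmT
    have hmS : Tendsto (fun k => m k + 1) atTop atTop := (tendsto_add_atTop_nat 1).comp hmT
    have hnS : Tendsto (fun k => n k + 1) atTop atTop := (tendsto_add_atTop_nat 1).comp hnT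
    have ham := hlim.comp hmT
    have han := hlim.comp hnT
    have hs : Tendsto (fun k => a (m k) + a (n k)) atTop (𝓝 0) := by simpa using ham.add han
    -- Every distance between one of `x m`, `x (m+1)` and one of `x n`, `x (n+1)` is within
    -- `a m + a n` of the level `ε`.
    have sq : ∀ u : ℕ → ℝ, (∀ k, |u k - ε| ≤ a (m k) + a (n k)) → Tendsto u atTop (𝓝 ε) :=
      fun u hu => tendsto_iff_dist_tendsto_zero.2 (squeeze_zero (fun _ => dist_nonneg) hu hs)
    have e1 : Tendsto (fun k => dist (x (m k)) (x (n k))) atTop (𝓝 ε) := sq _ fun k => by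
      have := hd (m k); have := hd (n k); have := hlt k; have := hge k
      have := dist_triangle (x (m k)) (x (n k)) (x (n k + 1))
      rw [abs_le]; constructor <;> linarith [ha0 (m k), ha0 (n k)]
    have e2 : Tendsto (fun k => dist (x (m k)) (x (n k + 1))) atTop (𝓝 ε) := sq _ fun k => by
      have := hd (m k); have := hd (n k); have := hlt k; have := hge k
      have := dist_triangle (x (m k)) (x (n k)) (x (n k + 1))
      rw [abs_le]; constructor <;> linarith [ha0 (m k), ha0 (n k)]
    have e3 : Tendsto (fun k => dist (x (n k)) (x (m k + 1))) atTop (𝓝 ε) := sq _ fun k => by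
      have := hd (m k); have := hd (n k); have := hlt k; have := hge k
      have := dist_triangle (x (m k)) (x (n k)) (x (n k + 1))
      have := dist_triangle (x (m k)) (x (m k + 1)) (x (n k))
      have := dist_triangle (x (n k)) (x (m k)) (x (m k + 1))
      rw [dist_comm (x (n k)) (x (m k))] at this
      have := dist_comm (x (n k)) (x (m k + 1))
      rw [abs_le]; constructor <;> linarith [ha0 (m k), ha0 (n k)]
    have e4 : Tendsto (fun k => dist (x (m k + 1)) (x (n k + 1))) atTop (𝓝 ε) := sq _ fun k => by
      have := hd (m k); have := hd (n k); have := hlt k; have := hge k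
      have := dist_triangle (x (m k)) (x (m k + 1)) (x (n k + 1))
      have := dist_triangle (x (m k + 1)) (x (m k)) (x (n k + 1))
      have := dist_triangle (x (m k)) (x (n k)) (x (n k + 1))
      have := dist_comm (x (m k)) (x (m k + 1))
      rw [abs_le]; constructor <;> linarith [ha0 (m k), ha0 (n k)]
    have f1 := hφlim.comp hmT
    have f2 := hφlim.comp hnT
    have f3 := hφlim.comp hmS
    have f4 := hφlim.comp hnS
    have g1 := (e1.add f1).add f2
    have hc := fun k => hcontr (x (m k)) (x (n k))
    simp only [hx, ← ha] at hc
    have hM := (g1.max ham).max (han.max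
      ((((((e2.add f1).add f4).add e3).add f3).add f2).div_const 2))
    have hL := g1.max han
    have hP := (e4.add f3).add f4
    have c1 : max (max (ε + 0 + 0) 0) (max 0 ((ε + 0 + 0 + ε + 0 + 0) / 2)) = ε := by
      rw [show (ε + 0 + 0 + ε + 0 + 0) / 2 = ε by ring]
      simp [hε.le]
    have c2 : max (ε + 0 + 0) 0 = ε := by simp [hε.le]
    rw [c1] at hM
    rw [c2] at hL
    rw [add_zero, add_zero] at hP
    refine hε.ne' (key hP hM hL (fun k => ?_) (fun k => ?_) (fun k => ?_) hc)
    · exact add_nonneg (add_nonneg dist_nonneg (hφ0 _)) (hφ0 _)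
    · exact le_max_of_le_right (le_max_of_le_left (ha0 _))
    · exact le_max_of_le_right (ha0 _)
  obtain ⟨z, hz⟩ := cauchySeq_tendsto_of_complete hcauchy
  have hφz : φ z = 0 := by
    by_contra hne
    have hpos : 0 < φ z := lt_of_le_of_ne (hφ0 z) (Ne.symm hne)
    have h1 := hz.eventually (hφ z (φ z / 2) (by linarith))
    have h2 := ge_of_tendsto hφlim (h1.mono fun n hn => hn.le)
    linarith
  have hS : ∀ y, 0 ≤ dist z y + φ z + φ y := fun y =>
    add_nonneg (add_nonneg dist_nonneg (hφ0 _)) (hφ0 _)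
  have hfix : dist z (T z) + φ z + φ (T z) = 0 := by
    have hc := fun k => hcontr (x k) z
    simp only [hx, ← ha] at hc
    have hz1 := (tendsto_add_atTop_iff_nat 1).2 hz
    have hφ1 := (tendsto_add_atTop_iff_nat 1).2 hφlim
    have g1 := ((hz.dist (tendsto_const_nhds (x := z))).add hφlim).add_const (φ z)
    have hP := ((hz1.dist (tendsto_const_nhds (x := T z))).add hφ1).add_const (φ (T z))
    have hM := (g1.max hlim).max ((tendsto_const_nhds (x := dist z (T z) + φ z + φ (T z))).max
      (((((((hz.dist (tendsto_const_nhds (x := T z))).add hφlim).add_const (φ (T z))).add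
        ((tendsto_const_nhds (x := z)).dist hz1)).add hφ1).add_const (φ z)).div_const 2))
    have hL := g1.max (tendsto_const_nhds (x := dist z (T z) + φ z + φ (T z)))
    have hSz := hS (T z)
    generalize hs : dist z (T z) + φ z + φ (T z) = s at *
    have c0 : dist z (T z) + 0 + φ (T z) = s := by rw [← hs, hφz]
    have c1 : max (max (dist z z + 0 + φ z) 0)
        (max s ((dist z (T z) + 0 + φ (T z) + dist z z + 0 + φ z) / 2)) = s := by
      rw [c0, hφz, dist_self, max_eq_left (a := s) (by linarith)]
      simpa using hSz
    have c2 : max (dist z z + 0 + φ z) s = s := by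
      rw [hφz, dist_self]; simpa using hSz
    rw [c0] at hP
    rw [c1] at hM
    rw [c2] at hL
    refine key hP hM hL (fun k => ?_) (fun k => ?_) (fun k => ?_) hc
    · exact add_nonneg (add_nonneg dist_nonneg (hφ0 _)) (hφ0 _)
    · exact le_max_of_le_right (le_max_of_le_left hSz)
    · exact le_max_of_le_right hSz
  have hTz : T z = z := by
    refine (dist_eq_zero.1 (le_antisymm ?_ dist_nonneg)).symm
    linarith [hφ0 z, hφ0 (T z)]
  refine ⟨z, ⟨hTz, hφz⟩, ?_⟩
  rintro w ⟨hTw, hφw⟩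
  have hc := hcontr w z
  have c : (dist w z + dist z w) / 2 = dist w z := by rw [dist_comm z w]; ring
  simp only [hTw, hTz, hφw, hφz, dist_self, add_zero, c, max_eq_left (dist_nonneg (x := w) (y := z)),
    max_eq_right (dist_nonneg (x := w) (y := z)), max_self] at hc
  have hconst : Tendsto (fun _ : ℕ => dist w z) atTop (𝓝 (dist w z)) := tendsto_const_nhds
  exact dist_eq_zero.1 (key hconst hconst hconst (fun _ => dist_nonneg) (fun _ => dist_nonneg)
    (fun _ => dist_nonneg) (fun _ => hc))
end

section
/- Let (X,d) be a complete b-rectangular metric space with coefficient s ≥ 1, T : X → X a mapping, and φ : X → [0,∞) a lower semicontinuous function. Suppose ψ is an altering distance function and ϕ : [0,∞) → [0,∞) is lower semicontinuous with ϕ(t) = 0 iff t = 0, and that for all x, y ∈ X, ψ(s²d(Tx,Ty) + φ(Tx) + φ(Ty)) ≤ ψ(M(x,y)) − ϕ(M(x,y)), where M(x,y) = max{d(x,y)+φ(x)+φ(y), d(x,Tx)+φ(x)+φ(Tx), d(y,Ty)+φ(y)+φ(Ty)}. Then T has a unique fixed point z ∈ X, and moreover φ(z) = 0. -/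
/-!
The Picard orbit `x n = T^[n] x₀` of any point converges to the fixed point.

Everything rests on `WeakContr.limit_eq_zero`: if `M k → t` and `L k → t` with
`ψ (L k) ≤ ψ (M k) - ϕ (M k)`, then continuity of `ψ` forces `ϕ (M k) → 0`, and lower
semicontinuity of `ϕ` gives `ϕ t = 0`, i.e. `t = 0`. It is applied four times.

* To `a n = d (x n) (x (n+1)) + φ (x n) + φ (x (n+1))`, which is antitone: consecutive distances
  and `φ (x n)` tend to `0`. If the orbit is not injective, then `a` is constant on a cycle, hence
  zero there, and the orbit contains a fixed point. The orbit is injective from here on.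
* To `max (d (x n) (x (n+2)) + φ (x n) + φ (x (n+2))) (a n)`, also antitone: the distances
  `d (x n) (x (n+2))` tend to `0`. This is needed since the rectangular inequality passes through
  two intermediate points.
* To `M (x (m-1)) (x (n-1))`, where `d (x m) (x n) ≥ ε` with `m` minimal: the rectangular inequality
  through `x (m-2)` and `x n` bounds `M` above by `s ε + o(1)`, while the contraction bounds it below
  by `s² ε ≥ s ε`. So the limit is `s ε > 0`, a contradiction, and the orbit is Cauchy.
* To `M (x n) z`, where `x n → z`: its limit is `d z (T z) + φ (T z)`, so `T z = z`.
-/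


open Filter Topology

/-! ### Consequences of the contraction inequality -/

/-- The generalised weak contraction hypotheses on a self-map `T` of a b-rectangular metric space.
Lower semicontinuity of `ϕ` is sequential. -/
structure WeakContr {X : Type*} {s : ℝ} (B : RectBMetric X s) (T : X → X) (φ : X → ℝ)
    (ψ ϕ : ℝ → ℝ) : Prop where
  one_le : 1 ≤ s
  phi_nonneg : ∀ x, 0 ≤ φ x
  alt : AlteringDistance ψ
  lsc : ∀ t : ℝ, 0 ≤ t → ∀ u : ℕ → ℝ, (∀ n, 0 ≤ u n) →
      Tendsto u atTop (𝓝 t) → ϕ t ≤ liminf (fun n => ϕ (u n)) atTop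
  nonneg : ∀ t ≥ (0:ℝ), 0 ≤ ϕ t
  zero_iff : ∀ t ≥ (0:ℝ), (ϕ t = 0 ↔ t = 0)
  contr : ∀ x y : X,
      ψ (s ^ 2 * B.d (T x) (T y) + φ (T x) + φ (T y)) ≤
        ψ (B.Mfun T φ x y) - ϕ (B.Mfun T φ x y)

namespace WeakContr

variable {X : Type*} {s : ℝ} {B : RectBMetric X s} {T : X → X} {φ : X → ℝ} {ψ ϕ : ℝ → ℝ}

/-- Comparison sequences with a common limit `t` and `ψ (L k) ≤ ψ (M k) - ϕ (M k)` force
`t = 0`. -/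
lemma limit_eq_zero (h : WeakContr B T φ ψ ϕ) {L M : ℕ → ℝ} {t : ℝ} (hL0 : ∀ n, 0 ≤ L n)
    (hM0 : ∀ n, 0 ≤ M n) (hL : Tendsto L atTop (𝓝 t)) (hM : Tendsto M atTop (𝓝 t))
    (hLM : ∀ᶠ n in atTop, ψ (L n) ≤ ψ (M n) - ϕ (M n)) : t = 0 := by
  have ht : 0 ≤ t := ge_of_tendsto' hM hM0
  have cont : ∀ u : ℕ → ℝ, (∀ n, 0 ≤ u n) → Tendsto u atTop (𝓝 t) →
      Tendsto (fun n => ψ (u n)) atTop (𝓝 (ψ t)) := fun u hu hut =>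
    (h.alt.1 t ht).tendsto.comp
      (tendsto_nhdsWithin_iff.2 ⟨hut, Eventually.of_forall hu⟩)
  have hdiff : Tendsto (fun n => ψ (M n) - ψ (L n)) atTop (𝓝 0) := by
    simpa using (cont M hM0 hM).sub (cont L hL0 hL)
  have hϕ : Tendsto (fun n => ϕ (M n)) atTop (𝓝 0) := by
    refine tendsto_of_tendsto_of_tendsto_of_le_of_le' tendsto_const_nhds hdiff
      (Eventually.of_forall fun n => h.nonneg _ (hM0 n)) ?_
    filter_upwards [hLM] with n hn
    linarith
  have h1 := h.lsc t ht M hM0 hM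
  rw [hϕ.liminf_eq] at h1
  exact (h.zero_iff t ht).1 (le_antisymm h1 (h.nonneg t ht))

lemma M_nonneg (h : WeakContr B T φ ψ ϕ) (x y : X) : 0 ≤ B.Mfun T φ x y := by
  refine le_trans ?_ (le_max_left _ _)
  linarith [B.nonneg x y, h.phi_nonneg x, h.phi_nonneg y]

lemma sq_mul_ge (h : WeakContr B T φ ψ ϕ) (x y : X) : B.d x y ≤ s ^ 2 * B.d x y := by
  have := B.nonneg x y
  have h1 : 1 ≤ s ^ 2 := one_le_pow₀ h.one_le
  nlinarith

/-- The contraction inequality with the left-hand argument replaced by any smaller one. -/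
lemma contr_of_le (h : WeakContr B T φ ψ ϕ) {x y : X} {r : ℝ} (hr : 0 ≤ r)
    (hle : r ≤ s ^ 2 * B.d (T x) (T y) + φ (T x) + φ (T y)) :
    ψ r ≤ ψ (B.Mfun T φ x y) - ϕ (B.Mfun T φ x y) :=
  (h.alt.2.1 hr (hr.trans hle) hle).trans (h.contr x y)

/-- A pair that is not strictly contracted has `M x y = 0`. -/
lemma M_eq_zero (h : WeakContr B T φ ψ ϕ) {x y : X}
    (hle : B.Mfun T φ x y ≤ s ^ 2 * B.d (T x) (T y) + φ (T x) + φ (T y)) :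
    B.Mfun T φ x y = 0 := by
  have h0 := h.M_nonneg x y
  have h1 := h.contr_of_le h0 hle
  exact (h.zero_iff _ h0).1 (le_antisymm (by linarith) (h.nonneg _ h0))

lemma le_M (h : WeakContr B T φ ψ ϕ) (x y : X) :
    s ^ 2 * B.d (T x) (T y) + φ (T x) + φ (T y) ≤ B.Mfun T φ x y := by
  by_contra! hlt
  have h0 := h.M_eq_zero hlt.le
  have h1 := h.contr x y
  have hz := h.alt.2.2.2 0 le_rfl
  have hA : 0 ≤ s ^ 2 * B.d (T x) (T y) + φ (T x) + φ (T y) := by linarith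
  rw [h0, hz.2 rfl, (h.zero_iff 0 le_rfl).2 rfl] at h1
  have := (h.alt.2.2.2 _ hA).1 (le_antisymm (by linarith) (h.alt.2.2.1 _ hA))
  linarith

lemma phi_eq_zero_of_fixed (h : WeakContr B T φ ψ ϕ) {w : X} (hw : T w = w) : φ w = 0 := by
  have hd := (B.eq_iff w w).2 rfl
  have h0 := h.phi_nonneg w
  have hM : B.Mfun T φ w w = φ w + φ w := by simp [RectBMetric.Mfun, hw, hd]
  have := h.M_eq_zero (x := w) (y := w) (by rw [hM, hw, hd]; linarith)
  linarith

lemma fixed_unique (h : WeakContr B T φ ψ ϕ) {w z : X} (hw : T w = w) (hz : T z = z) :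
    w = z := by
  have hM : B.Mfun T φ w z = B.d w z := by
    simp [RectBMetric.Mfun, hw, hz, (B.eq_iff w w).2 rfl, (B.eq_iff z z).2 rfl,
      h.phi_eq_zero_of_fixed hw, h.phi_eq_zero_of_fixed hz, B.nonneg]
  have := h.M_eq_zero (x := w) (y := z) (by
    rw [hM, hw, hz]
    linarith [h.sq_mul_ge w z, h.phi_nonneg w, h.phi_nonneg z])
  rw [hM] at this
  exact (B.eq_iff _ _).1 this

/-- The displacement of `x` under `T`, weighted by `φ`. -/
def disp (B : RectBMetric X s) (T : X → X) (φ : X → ℝ) (x : X) : ℝ :=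
  B.d x (T x) + φ x + φ (T x)

lemma disp_nonneg (h : WeakContr B T φ ψ ϕ) (x : X) : 0 ≤ disp B T φ x := by
  unfold disp
  linarith [B.nonneg x (T x), h.phi_nonneg x, h.phi_nonneg (T x)]

lemma M_eq (x y : X) : B.Mfun T φ x y =
    max (B.d x y + φ x + φ y) (max (disp B T φ x) (disp B T φ y)) := rfl

lemma disp_le (h : WeakContr B T φ ψ ϕ) (x : X) : disp B T φ (T x) ≤ disp B T φ x := by
  by_contra! hlt
  have hM : B.Mfun T φ x (T x) = disp B T φ (T x) := by
    rw [M_eq, max_eq_right hlt.le]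
    exact max_eq_right hlt.le
  have := h.M_eq_zero (x := x) (y := T x) (by
    rw [hM, disp]; linarith [h.sq_mul_ge (T x) (T (T x))])
  linarith [h.disp_nonneg x]

lemma M_self_image (h : WeakContr B T φ ψ ϕ) (x : X) :
    B.Mfun T φ x (T x) = disp B T φ x := by
  rw [M_eq, max_eq_left (h.disp_le x)]
  exact max_self _

lemma fixed_of_disp_le (h : WeakContr B T φ ψ ϕ) {x : X}
    (hx : disp B T φ x ≤ disp B T φ (T x)) : T x = x := by
  have := h.M_eq_zero (x := x) (y := T x) (by
    rw [h.M_self_image]; refine hx.trans ?_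
    rw [disp]; linarith [h.sq_mul_ge (T x) (T (T x))])
  rw [h.M_self_image, disp] at this
  refine ((B.eq_iff _ _).1 (le_antisymm ?_ (B.nonneg _ _))).symm
  linarith [h.phi_nonneg x, h.phi_nonneg (T x)]

/-! ### Picard orbits -/

section Orbit

variable {x : ℕ → X}

lemma disp_antitone (h : WeakContr B T φ ψ ϕ) (hx : ∀ n, x (n + 1) = T (x n)) :
    Antitone fun n => disp B T φ (x n) :=
  antitone_nat_of_succ_le fun n => by rw [hx]; exact h.disp_le _

lemma orbit_injective (h : WeakContr B T φ ψ ϕ) (hx : ∀ n, x (n + 1) = T (x n))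
    (hT : ∀ z, T z ≠ z) : Function.Injective x := by
  have key : ∀ n m, n < m → x n ≠ x m := fun n m hnm heq =>
    hT (x n) (h.fixed_of_disp_le (by
      rw [← hx, heq]
      exact h.disp_antitone hx hnm))
  intro n m heq
  by_contra hne
  rcases Nat.lt_or_gt_of_ne hne with hlt | hlt
  · exact key n m hlt heq
  · exact key m n hlt heq.symm

lemma antitone_tendsto {u : ℕ → ℝ} (hu : Antitone u) (h0 : ∀ n, 0 ≤ u n) :
    ∃ r, Tendsto u atTop (𝓝 r) ∧ ∀ n, r ≤ u n := by
  have hb : BddBelow (Set.range u) := ⟨0, by rintro _ ⟨n, rfl⟩; exact h0 n⟩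
  exact ⟨_, tendsto_atTop_ciInf hu hb, fun n => ciInf_le hb n⟩

lemma disp_tendsto (h : WeakContr B T φ ψ ϕ) (hx : ∀ n, x (n + 1) = T (x n)) :
    Tendsto (fun n => disp B T φ (x n)) atTop (𝓝 0) := by
  obtain ⟨r, hr, hle⟩ := antitone_tendsto (h.disp_antitone hx) fun n => h.disp_nonneg _
  have hr0 : 0 ≤ r := ge_of_tendsto' hr fun n => h.disp_nonneg _
  have : r = 0 := by
    refine h.limit_eq_zero (L := fun _ => r) (fun _ => hr0) (fun n => h.disp_nonneg (x n))
      tendsto_const_nhds hr (Eventually.of_forall fun n => ?_)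
    rw [← h.M_self_image]
    refine h.contr_of_le hr0 ((hle (n + 1)).trans ?_)
    simp only [hx, disp]
    linarith [h.sq_mul_ge (T (x n)) (T (T (x n)))]
  rwa [this] at hr

lemma phi_tendsto (h : WeakContr B T φ ψ ϕ) (hx : ∀ n, x (n + 1) = T (x n)) :
    Tendsto (fun n => φ (x n)) atTop (𝓝 0) :=
  squeeze_zero (fun n => h.phi_nonneg _) (fun n => by
    unfold disp; linarith [B.nonneg (x n) (T (x n)), h.phi_nonneg (T (x n))]) (h.disp_tendsto hx)

lemma dist_succ_le (h : WeakContr B T φ ψ ϕ) (hx : ∀ n, x (n + 1) = T (x n)) (n : ℕ) :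
    B.d (x n) (x (n + 1)) ≤ disp B T φ (x n) := by
  rw [hx]; unfold disp; linarith [h.phi_nonneg (x n), h.phi_nonneg (T (x n))]

lemma dist_two_tendsto (h : WeakContr B T φ ψ ϕ) (hx : ∀ n, x (n + 1) = T (x n)) :
    Tendsto (fun n => B.d (x n) (x (n + 2))) atTop (𝓝 0) := by
  set c : ℕ → ℝ := fun n => B.Mfun T φ (x n) (x (n + 2)) with hc
  have hanti := h.disp_antitone hx
  have hc' : ∀ n, c n =
      max (B.d (x n) (x (n + 2)) + φ (x n) + φ (x (n + 2))) (disp B T φ (x n)) := fun n => by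
    simp only [hc, M_eq]
    rw [max_eq_left (hanti (by lia : n ≤ n + 2))]
  have hstep : ∀ n, B.d (x (n + 1)) (x (n + 3)) + φ (x (n + 1)) + φ (x (n + 3)) ≤
      s ^ 2 * B.d (T (x n)) (T (x (n + 2))) + φ (T (x n)) + φ (T (x (n + 2))) := fun n => by
    rw [hx n, hx (n + 2)]
    linarith [h.sq_mul_ge (T (x n)) (T (x (n + 2)))]
  have hcanti : Antitone c := antitone_nat_of_succ_le fun n => by
    rw [hc' (n + 1)]
    refine max_le ((hstep n).trans (h.le_M _ _)) ((hanti n.le_succ).trans ?_)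
    rw [hc' n]; exact le_max_right _ _
  obtain ⟨r, hr, hle⟩ := antitone_tendsto hcanti fun n => h.M_nonneg _ _
  have hr0 : 0 ≤ r := ge_of_tendsto' hr fun n => h.M_nonneg _ _
  have hrz : r = 0 := by
    by_contra hne
    have hpos : 0 < r := lt_of_le_of_ne hr0 (Ne.symm hne)
    refine hne (h.limit_eq_zero (L := fun _ => r) (fun _ => hr0)
      (fun n => h.M_nonneg (x n) (x (n + 2))) tendsto_const_nhds hr ?_)
    filter_upwards [(h.disp_tendsto hx).eventually_lt_const hpos] with n hn
    refine h.contr_of_le hr0 (le_trans ?_ (hstep n))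
    -- The displacement is already below `r`, so the maximum is attained by the other term.
    have h1 := hle (n + 1)
    rw [hc' (n + 1)] at h1
    refine (le_max_iff.1 h1).resolve_right (not_le.2 ?_)
    exact (hanti n.le_succ).trans_lt hn
  rw [hrz] at hr
  refine squeeze_zero (fun n => B.nonneg _ _) (fun n => ?_) hr
  rw [hc' n]
  exact le_trans (by linarith [h.phi_nonneg (x n), h.phi_nonneg (x (n + 2))]) (le_max_left _ _)

/-! ### The Cauchy property and the limit of an orbit -/

/-- If the orbit is not Cauchy, there are arbitrarily late indices `n + 1 < m` such that
`x (m + 2)` has distance at least `ε` from `x (n + 1)`, but `x m` is closer than `ε`. Here `m + 2` is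
minimal; it is not `n + 2` or `n + 3`, as distances over one and two steps tend to `0`. -/
lemma exists_bad_pair (h : WeakContr B T φ ψ ϕ) (hx : ∀ n, x (n + 1) = T (x n))
    {ε : ℝ} (hε : 0 < ε)
    (hbad : ∀ N : ℕ, ∃ m ≥ N, ∃ n ≥ N, ε ≤ B.d (x m) (x n)) (N : ℕ) :
    ∃ n m, N ≤ n ∧ n + 1 < m ∧ ε ≤ B.d (x (m + 2)) (x (n + 1)) ∧
      B.d (x m) (x (n + 1)) < ε := by
  classical
  obtain ⟨N₁, hN₁⟩ := eventually_atTop.1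
    (((h.disp_tendsto hx).eventually_lt_const hε).and
      ((h.dist_two_tendsto hx).eventually_lt_const hε))
  have hex : ∃ n ≥ max N N₁, ∃ m, n + 1 < m ∧ ε ≤ B.d (x m) (x (n + 1)) := by
    obtain ⟨m, hm, n, hn, hmn⟩ := hbad (max N N₁ + 1)
    rcases lt_trichotomy m n with hlt | heq | hlt
    · exact ⟨m - 1, by lia, n, by lia,
        by rw [show m - 1 + 1 = m by lia, B.symm]; exact hmn⟩
    · rw [heq, (B.eq_iff _ _).2 rfl] at hmn
      linarith
    · exact ⟨n - 1, by lia, m, by lia,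
        by rw [show n - 1 + 1 = n by lia]; exact hmn⟩
  obtain ⟨n, hn, hm⟩ := hex
  obtain ⟨hlt, hge⟩ := Nat.find_spec hm
  have hmin := fun k => Nat.find_min (H := hm) (m := k)
  set m := Nat.find hm
  have h1 : m ≠ n + 2 := fun he => by
    rw [he, B.symm] at hge
    linarith [(hN₁ (n + 1) (by lia)).1, h.dist_succ_le hx (n + 1)]
  have h2 : m ≠ n + 3 := fun he => by
    rw [he, B.symm] at hge
    linarith [(hN₁ (n + 1) (by lia)).2]
  refine ⟨n, m - 2, by lia, by lia, by rwa [show m - 2 + 2 = m by lia], ?_⟩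
  by_contra! hcon
  exact hmin (m - 2) (by lia) ⟨by lia, hcon⟩

lemma orbit_cauchy (h : WeakContr B T φ ψ ϕ) (hx : ∀ n, x (n + 1) = T (x n))
    (hinj : Function.Injective x) : B.IsCauchySeq x := by
  by_contra hcon
  unfold RectBMetric.IsCauchySeq at hcon
  push Not at hcon
  obtain ⟨ε, hε, hbad⟩ := hcon
  choose n m hn hnm hge hlt using h.exists_bad_pair hx hε hbad
  have hs := h.one_le
  have hanti := h.disp_antitone hx
  set M : ℕ → ℝ := fun k => B.Mfun T φ (x (m k + 1)) (x (n k)) with hM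
  have hstep : ∀ k, s * ε ≤ s ^ 2 * B.d (T (x (m k + 1))) (T (x (n k))) +
      φ (T (x (m k + 1))) + φ (T (x (n k))) := fun k => by
    have h1 := hge k
    rw [hx (m k + 1), hx (n k)] at h1
    have h2 : s * ε ≤ s ^ 2 * B.d (T (x (m k + 1))) (T (x (n k))) := by
      have : s * ε ≤ s ^ 2 * ε := by
        gcongr
        exact le_self_pow₀ hs two_ne_zero
      exact this.trans (by gcongr)
    linarith [h.phi_nonneg (T (x (m k + 1))), h.phi_nonneg (T (x (n k)))]
  have hup : ∀ k, M k ≤ s * ε + (2 * s + 2) * disp B T φ (x k) := fun k => by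
    have hk0 := h.disp_nonneg (x k)
    have e1 : disp B T φ (x (n k)) ≤ disp B T φ (x k) := hanti (hn k)
    have e2 : disp B T φ (x (m k)) ≤ disp B T φ (x k) := hanti (by have := hn k; have := hnm k; lia)
    have e3 : disp B T φ (x (m k + 1)) ≤ disp B T φ (x (m k)) := hanti (Nat.le_succ _)
    have hsε : 0 ≤ s * ε := by positivity
    have hsd : 0 ≤ s * disp B T φ (x k) := by positivity
    have f1 : φ (x (m k + 1)) ≤ disp B T φ (x (m k + 1)) := by
      unfold disp
      linarith [B.nonneg (x (m k + 1)) (T (x (m k + 1))), h.phi_nonneg (T (x (m k + 1)))]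
    have f2 : φ (x (n k)) ≤ disp B T φ (x (n k)) := by
      unfold disp
      linarith [B.nonneg (x (n k)) (T (x (n k))), h.phi_nonneg (T (x (n k)))]
    have hd : B.d (x (m k + 1)) (x (n k)) ≤
        s * (disp B T φ (x k) + ε + disp B T φ (x k)) := by
      have hnmk := hnm k
      refine (B.rect _ _ (x (m k)) (x (n k + 1)) (hinj.ne (by lia)) (hinj.ne (by lia))
        (hinj.ne (by lia)) (hinj.ne (by lia)) (hinj.ne (by lia))).trans ?_
      have g1 := h.dist_succ_le hx (m k)
      have g2 := h.dist_succ_le hx (n k)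
      rw [B.symm] at g1 g2
      have g3 := hlt k
      gcongr
      · linarith
      · linarith
    simp only [hM, M_eq]
    refine max_le ?_ (max_le ?_ ?_) <;> nlinarith
  have hlim : Tendsto M atTop (𝓝 (s * ε)) := by
    refine tendsto_of_tendsto_of_tendsto_of_le_of_le tendsto_const_nhds ?_
      (fun k => (hstep k).trans (h.le_M _ _)) hup
    simpa using ((h.disp_tendsto hx).const_mul (2 * s + 2)).const_add (s * ε)
  have hpos : 0 < s * ε := by positivity
  exact hpos.ne' (h.limit_eq_zero (L := fun _ => s * ε) (fun _ => hpos.le)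
    (fun k => h.M_nonneg _ _) tendsto_const_nhds hlim
    (Eventually.of_forall fun k => h.contr_of_le hpos.le (hstep k)))

lemma fixed_of_tendsto (h : WeakContr B T φ ψ ϕ) (hφ : B.LSC φ)
    (hx : ∀ n, x (n + 1) = T (x n)) (hinj : Function.Injective x) {z : X}
    (hz : B.TendstoSeq x z) : T z = z := by
  by_contra hne
  have hφz : φ z = 0 := by
    have := hφ x z hz
    rw [(h.phi_tendsto hx).liminf_eq] at this
    exact le_antisymm this (h.phi_nonneg z)
  have hs := h.one_le
  have hdisp := h.disp_tendsto hx
  unfold RectBMetric.TendstoSeq at hz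
  have hzero := h.disp_nonneg z
  have hM : Tendsto (fun n => B.Mfun T φ (x n) z) atTop (𝓝 (disp B T φ z)) := by
    have h1 : Tendsto (fun n => B.d (x n) z + φ (x n) + φ z) atTop (𝓝 0) := by
      simpa [hφz] using (hz.add (h.phi_tendsto hx)).add_const (φ z)
    have := h1.max (hdisp.max (tendsto_const_nhds (x := disp B T φ z)))
    simpa [M_eq, hzero] using this
  -- A lower bound for the contracted side, from the rectangular inequality through `x n` and
  -- `x (n + 1)`; truncated at `0` because `ψ` is only controlled on `[0, ∞)`.
  set L : ℕ → ℝ := fun n =>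
    max 0 (disp B T φ z - s ^ 2 * (B.d (x n) z + disp B T φ (x n))) with hL
  have hLt : Tendsto L atTop (𝓝 (disp B T φ z)) := by
    have := (tendsto_const_nhds (x := (0 : ℝ)) (f := atTop (α := ℕ))).max
      (((hz.add hdisp).const_mul (s ^ 2)).const_sub (disp B T φ z))
    simpa [hL, hzero] using this
  -- By injectivity the orbit eventually avoids `z` and `T z`, as the rectangular inequality needs.
  have hav : ∀ w : X, ∀ᶠ n in atTop, x n ≠ w := fun w => by
    by_cases hw : ∃ k, x k = w
    · obtain ⟨k, rfl⟩ := hw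
      filter_upwards [eventually_gt_atTop k] with n hn
      exact hinj.ne hn.ne'
    · exact Eventually.of_forall fun n hn => hw ⟨n, hn⟩
  have hev : ∀ᶠ n in atTop, ψ (L n) ≤ ψ (B.Mfun T φ (x n) z) - ϕ (B.Mfun T φ (x n) z) := by
    filter_upwards [hav z, hav (T z), (tendsto_add_atTop_nat 1).eventually (hav z),
      (tendsto_add_atTop_nat 1).eventually (hav (T z))] with n a1 a2 a3 a4
    refine h.contr_of_le (le_max_left _ _) (max_le ?_ ?_)
    · have := B.nonneg (T (x n)) (T z)
      have := h.phi_nonneg (T (x n))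
      have := h.phi_nonneg (T z)
      positivity
    have hr := B.rect z (T z) (x n) (x (n + 1)) (hinj.ne (by lia)) a1 a2 a3 a4
    have h1 := h.dist_succ_le hx n
    rw [B.symm z (x n)] at hr
    rw [hx n] at hr h1
    have h2 := B.nonneg z (T z)
    have h3 : s * B.d z (T z) ≤
        s * (s * (B.d (x n) z + disp B T φ (x n) + B.d (T (x n)) (T z))) := by
      gcongr
      exact hr.trans (by gcongr)
    have h4 : B.d z (T z) ≤ s * B.d z (T z) := by nlinarith
    have h5 := h.phi_nonneg (T (x n))
    have h6 : disp B T φ z = B.d z (T z) + φ (T z) := by rw [disp, hφz]; ring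
    rw [h6]
    nlinarith
  have := h.limit_eq_zero (fun n => le_max_left _ _) (fun n => h.M_nonneg (x n) z) hLt hM hev
  refine hne ((B.eq_iff _ _).1 (le_antisymm ?_ (B.nonneg _ _))).symm
  unfold disp at this
  linarith [h.phi_nonneg z, h.phi_nonneg (T z)]

end Orbit

lemma exists_fixed (h : WeakContr B T φ ψ ϕ) (hcomp : B.Complete) (hφ : B.LSC φ) (x₀ : X) :
    ∃ z, T z = z := by
  by_contra! hT
  have hx : ∀ n, T^[n + 1] x₀ = T (T^[n] x₀) := fun n => Function.iterate_succ_apply' T n x₀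
  have hinj := h.orbit_injective (x := fun n => T^[n] x₀) hx hT
  obtain ⟨z, hz⟩ := hcomp _ (h.orbit_cauchy hx hinj)
  exact hT z (h.fixed_of_tendsto hφ hx hinj hz)

end WeakContr


theorem stmt4 {X : Type*} [Nonempty X] {s : ℝ} (hs : 1 ≤ s) (B : RectBMetric X s)
    (hcomp : B.Complete) (T : X → X) (φ : X → ℝ) (hφ0 : ∀ x, 0 ≤ φ x)
    (hφ : B.LSC φ) (ψ ϕ : ℝ → ℝ) (hψ : AlteringDistance ψ)
    (hϕl : ∀ (t : ℝ), 0 ≤ t → ∀ u : ℕ → ℝ, (∀ n, 0 ≤ u n) →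
      Filter.Tendsto u Filter.atTop (nhds t) →
      ϕ t ≤ Filter.liminf (fun n => ϕ (u n)) Filter.atTop)
    (hϕ0 : ∀ t ≥ (0:ℝ), 0 ≤ ϕ t) (hϕz : ∀ t ≥ (0:ℝ), (ϕ t = 0 ↔ t = 0))
    (hcontr : ∀ x y : X,
      ψ (s ^ 2 * B.d (T x) (T y) + φ (T x) + φ (T y)) ≤
        ψ (B.Mfun T φ x y) - ϕ (B.Mfun T φ x y)) :
    ∃ z : X, T z = z ∧ φ z = 0 ∧ ∀ w : X, T w = w → w = z := by
  have h : WeakContr B T φ ψ ϕ := ⟨hs, hφ0, hψ, hϕl, hϕ0, hϕz, hcontr⟩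
  obtain ⟨x₀⟩ := ‹Nonempty X›
  obtain ⟨z, hz⟩ := h.exists_fixed hcomp hφ x₀
  exact ⟨z, hz, h.phi_eq_zero_of_fixed hz, fun w hw => h.fixed_unique hw hz⟩
end

section
/- Let (X,d) be a complete b-rectangular metric space with coefficient s ≥ 1, T : X → X a mapping, and φ : X → [0,∞) a lower semicontinuous function. Suppose ψ is an altering distance function and ϕ : [0,∞) → [0,∞) is right upper semicontinuous with ψ(t) > ϕ(t) for all t > 0 and ϕ(t) = 0 iff t = 0, and that for all x, y ∈ X, ψ(s²d(Tx,Ty) + φ(Tx) + φ(Ty)) ≤ ϕ(M(x,y)), where M(x,y) = max{d(x,y)+φ(x)+φ(y), d(x,Tx)+φ(x)+φ(Tx), d(y,Ty)+φ(y)+φ(Ty)}. Then T has a unique fixed point z ∈ X, and moreover φ(z) = 0. -/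
/-!
The contraction inequality forces a Meir–Keeler condition: for each `ε > 0` there is `δ > 0`
such that `M(x,y) < ε + δ` implies `s² d(Tx,Ty) + φ(Tx) + φ(Ty) ≤ ε - δ`
(`meirKeeler_of_altering`). The rest of the argument involves `ψ` and `ϕ` only
through this condition.

Write `Q(x,y) = d(x,y) + φ(x) + φ(y)` and `xₙ = Tⁿ x₀`. The sequence
`max (Q(xₙ,xₙ₊₂)) (Q(xₙ,xₙ₊₁))` is antitone, and the Meir–Keeler condition excludes a positive
limit (`tendsto_orbit`). If two terms of the orbit coincide, the orbit is eventually periodic, so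
`d(xₙ,xₙ₊₁) = 0` for some `n` and `xₙ` is a fixed point (`fixed_of_repeat`). If all terms are distinct, the
rectangular inequality along `xₘ, xₘ₊₂, xₘ₊₁, xₙ₊₁` together with the Meir–Keeler condition shows
`d(xₘ,xₙ) < ε` by induction on `n` (`cauchy_orbit`). The limit `z` has `φ(z) = 0` by lower
semicontinuity (`fixed_of_tendsto`), and `Tz = z` since otherwise the rectangular inequality along `z, xₙ, xₙ₊₁, Tz`
gives `d(z,Tz) < d(z,Tz)`.

Finally, the strict inequality `Q(Tx,Ty) < M(x,y)` for `M(x,y) > 0` gives `φ(w) = 0` for each fixed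
point `w` (take `x = y = w`), and then that two fixed points agree.
-/

open Filter Topology

namespace RectBMetric

/-! ### The Meir–Keeler condition -/

variable {X : Type*} {s : ℝ}

/-- The quantity `d(x,y) + φ(x) + φ(y)`. -/
def Q (B : RectBMetric X s) (φ : X → ℝ) (x y : X) : ℝ := B.d x y + φ x + φ y

/-- The Meir–Keeler condition satisfied by the contractions under study; the gap `δ` below `ε` in
the conclusion makes it directly usable in limits. -/
def MeirKeeler (B : RectBMetric X s) (T : X → X) (φ : X → ℝ) : Prop :=
  ∀ ε : ℝ, 0 < ε → ∃ δ : ℝ, 0 < δ ∧ ∀ x y : X, B.Mfun T φ x y < ε + δ →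
    s ^ 2 * B.d (T x) (T y) + φ (T x) + φ (T y) ≤ ε - δ

variable {B : RectBMetric X s} {T : X → X} {φ : X → ℝ}

lemma d_self (B : RectBMetric X s) (x : X) : B.d x x = 0 := (B.eq_iff x x).2 rfl

lemma Mfun_eq (x y : X) :
    B.Mfun T φ x y = max (B.Q φ x y) (max (B.Q φ x (T x)) (B.Q φ y (T y))) := rfl

lemma Q_nonneg (hφ0 : ∀ x, 0 ≤ φ x) (x y : X) : 0 ≤ B.Q φ x y := by
  have := B.nonneg x y
  have := hφ0 x
  have := hφ0 y
  unfold Q; linarith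

lemma Q_le_contr (hs : 1 ≤ s) (x y : X) :
    B.Q φ x y ≤ s ^ 2 * B.d x y + φ x + φ y := by
  have h1 : 1 ≤ s ^ 2 := one_le_pow₀ hs
  have := mul_le_mul_of_nonneg_right h1 (B.nonneg x y)
  unfold Q; linarith

lemma MeirKeeler.Q_lt (hs : 1 ≤ s) (h : B.MeirKeeler T φ) {x y : X}
    (hM : 0 < B.Mfun T φ x y) : B.Q φ (T x) (T y) < B.Mfun T φ x y := by
  obtain ⟨δ, hδ, H⟩ := h _ hM
  have := H x y (by linarith)
  have := Q_le_contr (B := B) (φ := φ) hs (T x) (T y)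
  linarith

lemma MeirKeeler.Q_le (hs : 1 ≤ s) (hφ0 : ∀ x, 0 ≤ φ x) (h : B.MeirKeeler T φ) (x y : X) :
    B.Q φ (T x) (T y) ≤ B.Mfun T φ x y := by
  by_contra! hlt
  have h0 : 0 ≤ B.Mfun T φ x y := (Q_nonneg hφ0 x y).trans (le_max_left _ _)
  obtain ⟨δ, hδ, H⟩ := h _ (h0.trans_lt hlt)
  have := H x y (by linarith)
  have := Q_le_contr (B := B) (φ := φ) hs (T x) (T y)
  linarith

lemma MeirKeeler.Q_step (hs : 1 ≤ s) (hφ0 : ∀ x, 0 ≤ φ x) (h : B.MeirKeeler T φ) (x : X) :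
    B.Q φ (T x) (T (T x)) ≤ B.Q φ x (T x) := by
  by_contra! hlt
  have hM : B.Mfun T φ x (T x) = B.Q φ (T x) (T (T x)) := by
    rw [Mfun_eq, max_eq_right hlt.le, max_eq_right hlt.le]
  have h0 := Q_nonneg (B := B) hφ0 x (T x)
  have := h.Q_lt hs (x := x) (y := T x) (by rw [hM]; linarith)
  linarith

/-! ### Orbits -/

/-- Consecutive terms and terms two apart of an orbit become arbitrarily close, and `φ` tends to
zero along the orbit. -/
lemma tendsto_orbit (hs : 1 ≤ s) (hφ0 : ∀ x, 0 ≤ φ x) (h : B.MeirKeeler T φ)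
    (x : ℕ → X) (hx : ∀ n, x (n + 1) = T (x n)) :
    Tendsto (fun n => max (B.Q φ (x n) (x (n + 2))) (B.Q φ (x n) (x (n + 1)))) atTop (𝓝 0) := by
  have hstep : ∀ n, B.Q φ (x (n + 1)) (x (n + 2)) ≤ B.Q φ (x n) (x (n + 1)) := fun n => by
    have := h.Q_step hs hφ0 (x n)
    rwa [← hx, ← hx] at this
  set f : ℕ → ℝ := fun n => max (B.Q φ (x n) (x (n + 2))) (B.Q φ (x n) (x (n + 1))) with hf
  have hM1 : ∀ n, B.Mfun T φ (x n) (x (n + 1)) ≤ f n := fun n => by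
    rw [Mfun_eq, ← hx, ← hx]
    exact max_le (le_max_right _ _)
      (max_le (le_max_right _ _) ((hstep n).trans (le_max_right _ _)))
  have hM2 : ∀ n, B.Mfun T φ (x n) (x (n + 2)) ≤ f n := fun n => by
    rw [Mfun_eq, ← hx, ← hx]
    exact max_le (le_max_left _ _) (max_le (le_max_right _ _)
      (((hstep (n + 1)).trans (hstep n)).trans (le_max_right _ _)))
  have hanti : Antitone f := antitone_nat_of_succ_le fun n => by
    refine max_le ?_ ((hstep n).trans (le_max_right _ _))
    have := h.Q_le hs hφ0 (x n) (x (n + 2))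
    rw [← hx, ← hx] at this
    exact this.trans (hM2 n)
  have h0 : ∀ n, 0 ≤ f n := fun n => (Q_nonneg hφ0 _ _).trans (le_max_left _ _)
  have hlim := tendsto_atTop_ciInf hanti ⟨0, by rintro _ ⟨n, rfl⟩; exact h0 n⟩
  have hle : ∀ n, (⨅ i, f i) ≤ f n := fun n =>
    ciInf_le ⟨0, by rintro _ ⟨n, rfl⟩; exact h0 n⟩ n
  have hr0 : 0 ≤ ⨅ i, f i := le_ciInf h0
  rcases hr0.eq_or_lt with hr | hr
  · rwa [← hr] at hlim
  · exfalso
    obtain ⟨δ, hδ, H⟩ := h _ hr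
    obtain ⟨n, hn⟩ := (hlim.eventually (gt_mem_nhds (lt_add_of_pos_right _ hδ))).exists
    have h1 := H (x n) (x (n + 1)) ((hM1 n).trans_lt hn)
    have h2 := H (x n) (x (n + 2)) ((hM2 n).trans_lt hn)
    rw [← hx, ← hx] at h1 h2
    have : f (n + 1) ≤ (⨅ i, f i) - δ :=
      max_le ((Q_le_contr hs _ _).trans h2) ((Q_le_contr hs _ _).trans h1)
    linarith [hle (n + 1)]

lemma cauchy_orbit (hs : 1 ≤ s) (hφ0 : ∀ x, 0 ≤ φ x) (h : B.MeirKeeler T φ)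
    (x : ℕ → X) (hx : ∀ n, x (n + 1) = T (x n)) (hinj : Function.Injective x) :
    B.IsCauchySeq x := by
  have hlim := tendsto_orbit hs hφ0 h x hx
  intro ε hε
  obtain ⟨δ, hδ, H⟩ := h ε hε
  have hs0 : 0 < s := by linarith
  set η := min ε (δ / (4 * s)) with hη
  have hη0 : 0 < η := lt_min hε (by positivity)
  have hηε : η ≤ ε := min_le_left _ _
  have hηδ : 4 * (s * η) ≤ δ := by
    have : η ≤ δ / (4 * s) := min_le_right _ _
    rw [le_div_iff₀ (by positivity)] at this
    linarith
  have hηs : η ≤ s * η := by nlinarith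
  obtain ⟨N, hN⟩ := eventually_atTop.1 (hlim.eventually (gt_mem_nhds hη0))
  have hD : ∀ n ≥ N, B.Q φ (x n) (x (n + 1)) < η := fun n hn =>
    (le_max_right _ _).trans_lt (hN n hn)
  have hE : ∀ n ≥ N, B.Q φ (x n) (x (n + 2)) < η := fun n hn =>
    (le_max_left _ _).trans_lt (hN n hn)
  have hd1 : ∀ n ≥ N, B.d (x n) (x (n + 1)) < η ∧ φ (x n) < η := fun n hn => by
    have := hD n hn
    have := B.nonneg (x n) (x (n + 1))
    have := hφ0 (x n)
    have := hφ0 (x (n + 1))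
    unfold Q at *
    constructor <;> linarith
  have hd2 : ∀ n ≥ N, B.d (x n) (x (n + 2)) < η := fun n hn => by
    have := hE n hn
    have := hφ0 (x n)
    have := hφ0 (x (n + 2))
    unfold Q at *
    linarith
  have key : ∀ m ≥ N, ∀ k, B.d (x m) (x (m + k)) < ε := by
    intro m hm k
    induction k with
    | zero => simpa [d_self] using hε
    | succ k ih =>
      rcases k with _ | _ | k
      · exact (hd1 m hm).1.trans_le hηε
      · exact (hd2 m hm).trans_le hηε
      · have hM : B.Mfun T φ (x m) (x (m + (k + 2))) < ε + δ := by
          rw [Mfun_eq, ← hx, ← hx]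
          have h1 := hD m hm
          have h2 := hD (m + (k + 2)) (by omega)
          have h3 := (hd1 m hm).2
          have h4 := (hd1 (m + (k + 2)) (by omega)).2
          refine max_lt ?_ (max_lt (by linarith) (by linarith))
          have ih' : B.d (x m) (x (m + (k + 2))) < ε := ih
          unfold Q
          linarith
        have hA := H _ _ hM
        rw [← hx, ← hx] at hA
        have hr := B.rect (x m) (x (m + (k + 2) + 1)) (x (m + 2)) (x (m + 1))
          (hinj.ne (by omega)) (hinj.ne (by omega)) (hinj.ne (by omega))
          (hinj.ne (by omega)) (hinj.ne (by omega))
        rw [B.symm (x (m + 2))] at hr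
        have h1 := hd2 m hm
        have h2 := (hd1 (m + 1) (by omega)).1
        have h3 := hφ0 (x (m + 1))
        have h4 := hφ0 (x (m + (k + 2) + 1))
        have h5 := B.nonneg (x (m + 1)) (x (m + (k + 2) + 1))
        have h6 := mul_le_mul_of_nonneg_left h1.le hs0.le
        have h7 := mul_le_mul_of_nonneg_left h2.le hs0.le
        have h8 : s * B.d (x (m + 1)) (x (m + (k + 2) + 1)) ≤
            s ^ 2 * B.d (x (m + 1)) (x (m + (k + 2) + 1)) :=
          mul_le_mul_of_nonneg_right (by nlinarith) h5
        show B.d (x m) (x (m + (k + 2) + 1)) < ε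
        have h9 : B.d (x m) (x (m + (k + 2) + 1)) ≤ s * B.d (x m) (x (m + 2)) +
          s * B.d (x (m + 1)) (x (m + 1 + 1)) +
          s * B.d (x (m + 1)) (x (m + (k + 2) + 1)) := by
            refine hr.trans (le_of_eq ?_)
            ring
        linarith
  refine ⟨N, fun m hm n hn => ?_⟩
  rcases le_total m n with hmn | hmn
  · obtain ⟨k, rfl⟩ := Nat.exists_eq_add_of_le hmn
    exact key m hm k
  · obtain ⟨k, rfl⟩ := Nat.exists_eq_add_of_le hmn
    rw [B.symm]
    exact key n hn k

/-! ### Fixed points -/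

lemma MeirKeeler.phi_eq_zero (hs : 1 ≤ s) (hφ0 : ∀ x, 0 ≤ φ x) (h : B.MeirKeeler T φ) {w : X}
    (hw : T w = w) : φ w = 0 := by
  by_contra hne
  have hpos : 0 < φ w := lt_of_le_of_ne (hφ0 w) (Ne.symm hne)
  have hM : B.Mfun T φ w w = B.Q φ w w := by simp [Mfun_eq, hw]
  have := h.Q_lt hs (x := w) (y := w) (by rw [hM]; unfold Q; rw [d_self]; linarith)
  rw [hM, hw] at this
  exact lt_irrefl _ this

lemma MeirKeeler.fixed_unique (hs : 1 ≤ s) (hφ0 : ∀ x, 0 ≤ φ x) (h : B.MeirKeeler T φ) {w z : X}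
    (hw : T w = w) (hz : T z = z) : w = z := by
  rw [← B.eq_iff]
  by_contra hne
  have hpos : 0 < B.d w z := lt_of_le_of_ne (B.nonneg _ _) (Ne.symm hne)
  have h1 := h.phi_eq_zero hs hφ0 hw
  have h2 := h.phi_eq_zero hs hφ0 hz
  have hM : B.Mfun T φ w z = B.Q φ w z := by
    simp [Mfun_eq, hw, hz, Q, h1, h2, d_self, hpos.le]
  have := h.Q_lt hs (x := w) (y := z) (by rw [hM]; unfold Q; linarith)
  rw [hM, hw, hz] at this
  exact lt_irrefl _ this

/-- The limit of an injective orbit is a fixed point. -/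
lemma fixed_of_tendsto (hs : 1 ≤ s) (hφ0 : ∀ x, 0 ≤ φ x) (hφ : B.LSC φ)
    (h : B.MeirKeeler T φ) (x : ℕ → X) (hx : ∀ n, x (n + 1) = T (x n))
    (hinj : Function.Injective x) {z : X} (hz : B.TendstoSeq x z) : T z = z := by
  have hs0 : 0 < s := by linarith
  have hlim := tendsto_orbit hs hφ0 h x hx
  have hD : Tendsto (fun n => B.Q φ (x n) (x (n + 1))) atTop (𝓝 0) :=
    squeeze_zero (fun n => Q_nonneg hφ0 _ _) (fun n => le_max_right _ _) hlim
  have hφx : Tendsto (fun n => φ (x n)) atTop (𝓝 0) :=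
    squeeze_zero (fun n => hφ0 _) (fun n => by
      have := B.nonneg (x n) (x (n + 1))
      have := hφ0 (x (n + 1))
      unfold Q
      linarith) hD
  have hφz : φ z = 0 := le_antisymm ((hφ x z hz).trans_eq hφx.liminf_eq) (hφ0 z)
  by_contra hne
  have hρ : 0 < B.d z (T z) := lt_of_le_of_ne (B.nonneg _ _)
    fun h0 => hne ((B.eq_iff _ _).1 h0.symm).symm
  have hR : 0 < B.Q φ z (T z) := by
    have := hφ0 (T z)
    unfold Q
    linarith
  obtain ⟨δ, hδ, H⟩ := h _ hR
  have hη : 0 < min (B.Q φ z (T z) / 2) (δ / (4 * s)) := lt_min (by linarith) (by positivity)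
  -- An injective sequence eventually avoids any given point.
  have hav : ∀ p : X, ∀ᶠ n in atTop, x n ≠ p := fun p => by
    have := hinj.tendsto_cofinite.eventually (Filter.eventually_cofinite_ne p)
    rwa [Nat.cofinite_eq_atTop] at this
  have hsh : ∀ p : X, ∀ᶠ n in atTop, x (n + 1) ≠ p := fun p =>
    (tendsto_add_atTop_nat 1).eventually (hav p)
  obtain ⟨n, h1, h2, h3, a1, a2, a3, a4⟩ := ((hz.eventually (gt_mem_nhds hη)).and
    ((hD.eventually (gt_mem_nhds hη)).and ((hφx.eventually (gt_mem_nhds hη)).and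
    ((hav z).and ((hav (T z)).and ((hsh z).and (hsh (T z)))))))).exists
  have hM : B.Mfun T φ (x n) z < B.Q φ z (T z) + δ := by
    rw [Mfun_eq, ← hx]
    have e1 := h1.trans_le (min_le_left _ _)
    have e2 := h2.trans_le (min_le_left _ _)
    have e3 := h3.trans_le (min_le_left _ _)
    refine max_lt ?_ (max_lt (by linarith) (by linarith))
    have : B.Q φ (x n) z = B.d (x n) z + φ (x n) := by simp [Q, hφz]
    linarith
  have hA := H _ _ hM
  rw [← hx] at hA
  have hr := B.rect z (T z) (x n) (x (n + 1)) (hinj.ne (by omega)) a1 a2 a3 a4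
  have e1 := (lt_div_iff₀ (by positivity)).1 (h1.trans_le (min_le_right _ _))
  have e2 := (lt_div_iff₀ (by positivity)).1 (h2.trans_le (min_le_right _ _))
  rw [B.symm z (x n)] at hr
  have h5 := B.nonneg (x (n + 1)) (T z)
  have h8 : s * B.d (x (n + 1)) (T z) ≤ s ^ 2 * B.d (x (n + 1)) (T z) :=
    mul_le_mul_of_nonneg_right (by nlinarith) h5
  have f1 := hφ0 (x n)
  have f2 := hφ0 (x (n + 1))
  have e3 : s * B.d (x n) (x (n + 1)) ≤ s * B.Q φ (x n) (x (n + 1)) :=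
    mul_le_mul_of_nonneg_left (by unfold Q; linarith) hs0.le
  have e4 : B.Q φ z (T z) = B.d z (T z) + φ (T z) := by simp [Q, hφz]
  have e5 : s * (B.d (x n) z + B.d (x n) (x (n + 1)) + B.d (x (n + 1)) (T z)) =
    s * B.d (x n) z + s * B.d (x n) (x (n + 1)) + s * B.d (x (n + 1)) (T z) := by ring
  linarith

/-- If an orbit repeats a value, it meets a fixed point: the sequence `d(xₙ,xₙ₊₁)` takes
the value `d(xᵢ,xᵢ₊₁)` infinitely often and tends to zero, so that value is zero. -/
lemma fixed_of_repeat (hs : 1 ≤ s) (hφ0 : ∀ x, 0 ≤ φ x) (h : B.MeirKeeler T φ)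
    (x : ℕ → X) (hx : ∀ n, x (n + 1) = T (x n)) {i j : ℕ} (hij : i < j) (he : x i = x j) :
    T (x i) = x i := by
  have hlim := tendsto_orbit hs hφ0 h x hx
  have hper : ∀ n, x (i + n) = x (j + n) := fun n => by
    induction n with
    | zero => exact he
    | succ n ih => rw [← add_assoc, ← add_assoc, hx, hx, ih]
  have hrep : ∀ k, x (i + k * (j - i)) = x i := fun k => by
    induction k with
    | zero => simp
    | succ k ih =>
      have h1 : i + (k + 1) * (j - i) = j + k * (j - i) := by
        rw [Nat.succ_mul]
        omega
      rw [h1, ← hper, ih]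
  have hto : Tendsto (fun k => i + k * (j - i)) atTop atTop :=
    tendsto_atTop_mono (fun k => by
      have : k * 1 ≤ k * (j - i) := Nat.mul_le_mul_left k (by omega)
      show k ≤ i + k * (j - i)
      omega) tendsto_id
  have hD : Tendsto (fun n => B.d (x n) (x (n + 1))) atTop (𝓝 0) :=
    squeeze_zero (fun n => B.nonneg _ _) (fun n => by
      refine le_trans ?_ (le_max_right _ _)
      have := hφ0 (x n)
      have := hφ0 (x (n + 1))
      unfold Q
      linarith) hlim
  have hc := hD.comp hto
  have hconst : ((fun n => B.d (x n) (x (n + 1))) ∘ fun k => i + k * (j - i)) =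
      fun _ => B.d (x i) (T (x i)) := by
    funext k
    simp only [Function.comp_apply, hx, hrep]
  rw [hconst] at hc
  exact ((B.eq_iff _ _).1 (tendsto_nhds_unique tendsto_const_nhds hc)).symm

/-! ### From altering distances to the Meir–Keeler condition -/

/-- The scalar Meir–Keeler property: near `ε` the function `ϕ` stays, by upper semicontinuity,
below a constant `c < ψ(ε - δ)`; away from `ε` the bound `ψ(a) ≤ ϕ(m)` simply gives `a ≤ m`. -/
lemma meirKeeler_of_altering {ψ ϕ : ℝ → ℝ} (hψ : AlteringDistance ψ)
    (hϕu : ∀ (t : ℝ), 0 ≤ t → ∀ u : ℕ → ℝ, (∀ n, 0 ≤ u n) →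
      Tendsto u atTop (𝓝 t) → limsup (fun n => ϕ (u n)) atTop ≤ ϕ t)
    (hϕz : ∀ t ≥ (0:ℝ), (ϕ t = 0 ↔ t = 0))
    (hψϕ : ∀ t : ℝ, 0 < t → ϕ t < ψ t) {ε : ℝ} (hε : 0 < ε) :
    ∃ δ : ℝ, 0 < δ ∧ ∀ a m : ℝ, 0 ≤ a → 0 ≤ m → ψ a ≤ ϕ m → m < ε + δ → a ≤ ε - δ := by
  obtain ⟨hc, hmono, hnn, hz⟩ := hψ
  have hle : ∀ t, 0 ≤ t → ϕ t ≤ ψ t := fun t ht => by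
    rcases ht.eq_or_lt with rfl | ht
    · rw [(hϕz 0 le_rfl).2 rfl]; exact hnn 0 le_rfl
    · exact (hψϕ t ht).le
  have ham : ∀ a m : ℝ, 0 ≤ a → 0 ≤ m → ψ a ≤ ϕ m → a ≤ m := by
    intro a m ha hm hψa
    rcases hm.eq_or_lt with rfl | hm'
    · rw [(hϕz 0 le_rfl).2 rfl] at hψa
      exact ((hz a ha).1 (le_antisymm hψa (hnn a ha))).le
    · by_contra! hlt
      exact absurd (hmono hm ha hlt.le) (not_le.2 (hψa.trans_lt (hψϕ m hm')))
  obtain ⟨c, hc1, hc2⟩ := exists_between (hψϕ ε hε)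
  have hcont : ContinuousAt ψ ε := hc.continuousAt (Ici_mem_nhds hε)
  obtain ⟨δ₁, hδ₁, H1⟩ := Metric.eventually_nhds_iff.1 (hcont.eventually (lt_mem_nhds hc2))
  have hδ₂ : ∃ δ₂ > 0, ∀ m, 0 ≤ m → |m - ε| < δ₂ → ϕ m < c := by
    by_contra! hcon
    choose u hu0 hu1 hu2 using fun n : ℕ => hcon (1 / ((n : ℝ) + 1)) (by positivity)
    have hu : Tendsto u atTop (𝓝 ε) := by
      rw [tendsto_iff_dist_tendsto_zero]
      exact squeeze_zero (fun _ => dist_nonneg) (fun n => (hu1 n).le)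
        tendsto_one_div_add_atTop_nhds_zero_nat
    have hbd : ∀ n, ϕ (u n) ≤ ψ (ε + 1) := fun n => by
      refine (hle _ (hu0 n)).trans (hmono (hu0 n) (show (0:ℝ) ≤ ε + 1 by linarith) ?_)
      have h1 : 1 / ((n : ℝ) + 1) ≤ 1 := by
        rw [div_le_one (by positivity)]
        have := n.cast_nonneg (α := ℝ)
        linarith
      linarith [(abs_lt.1 (hu1 n)).2]
    -- Boundedness of `ϕ ∘ u` is what rules out a junk value of the real-valued `limsup`.
    have : c ≤ limsup (fun n => ϕ (u n)) atTop :=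
      le_limsup_of_frequently_le (Frequently.of_forall hu2) (isBoundedUnder_of ⟨_, hbd⟩)
    linarith [hϕu ε hε.le u hu0 hu]
  obtain ⟨δ₂, hδ₂, H2⟩ := hδ₂
  set δ := min ε (min δ₁ δ₂) / 2 with hδ
  have hp : 0 < min ε (min δ₁ δ₂) := lt_min hε (lt_min hδ₁ hδ₂)
  have l1 : min ε (min δ₁ δ₂) ≤ ε := min_le_left _ _
  have l2 : min ε (min δ₁ δ₂) ≤ δ₁ := (min_le_right _ _).trans (min_le_left _ _)
  have l3 : min ε (min δ₁ δ₂) ≤ δ₂ := (min_le_right _ _).trans (min_le_right _ _)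
  refine ⟨δ, by positivity, fun a m ha hm hψa hmlt => ?_⟩
  by_cases hmε : m ≤ ε - δ
  · exact (ham a m ha hm hψa).trans hmε
  · push Not at hmε
    have h1 : ϕ m < c := H2 m hm (by rw [abs_lt]; constructor <;> linarith)
    have h2 : c < ψ (ε - δ) := H1 (by
      rw [Real.dist_eq, abs_lt]; constructor <;> linarith)
    by_contra! hlt
    have := hmono (show (0:ℝ) ≤ ε - δ by linarith) ha hlt.le
    linarith

end RectBMetric

theorem stmt5 {X : Type*} [Nonempty X] {s : ℝ} (hs : 1 ≤ s) (B : RectBMetric X s)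
    (hcomp : B.Complete) (T : X → X) (φ : X → ℝ) (hφ0 : ∀ x, 0 ≤ φ x)
    (hφ : B.LSC φ) (ψ ϕ : ℝ → ℝ) (hψ : AlteringDistance ψ)
    (hϕu : ∀ (t : ℝ), 0 ≤ t → ∀ u : ℕ → ℝ, (∀ n, 0 ≤ u n) →
      Filter.Tendsto u Filter.atTop (nhds t) →
      Filter.limsup (fun n => ϕ (u n)) Filter.atTop ≤ ϕ t)
    (hϕ0 : ∀ t ≥ (0:ℝ), 0 ≤ ϕ t) (hϕz : ∀ t ≥ (0:ℝ), (ϕ t = 0 ↔ t = 0))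
    (hψϕ : ∀ t : ℝ, 0 < t → ϕ t < ψ t)
    (hcontr : ∀ x y : X,
      ψ (s ^ 2 * B.d (T x) (T y) + φ (T x) + φ (T y)) ≤ ϕ (B.Mfun T φ x y)) :
    ∃ z : X, T z = z ∧ φ z = 0 ∧ ∀ w : X, T w = w → w = z := by
  have hMK : B.MeirKeeler T φ := by
    intro ε hε
    obtain ⟨δ, hδ, H⟩ := RectBMetric.meirKeeler_of_altering hψ hϕu hϕz hψϕ hε
    refine ⟨δ, hδ, fun x y hM => H _ _ ?_ ?_ (hcontr x y) hM⟩
    · exact (RectBMetric.Q_nonneg hφ0 _ _).trans (RectBMetric.Q_le_contr hs _ _)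
    · exact (RectBMetric.Q_nonneg (B := B) hφ0 x y).trans (le_max_left _ _)
  have hfix : ∃ z, T z = z := by
    obtain ⟨x₀⟩ := ‹Nonempty X›
    have hx : ∀ n, T^[n + 1] x₀ = T (T^[n] x₀) := fun n => Function.iterate_succ_apply' T n x₀
    by_cases hinj : Function.Injective fun n => T^[n] x₀
    · obtain ⟨z, hz⟩ := hcomp _ (RectBMetric.cauchy_orbit hs hφ0 hMK _ hx hinj)
      exact ⟨z, RectBMetric.fixed_of_tendsto hs hφ0 hφ hMK _ hx hinj hz⟩
    · simp only [Function.Injective, not_forall] at hinj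
      obtain ⟨i, j, he, hne⟩ := hinj
      rcases lt_or_gt_of_ne hne with hij | hij
      · exact ⟨_, RectBMetric.fixed_of_repeat hs hφ0 hMK (fun n => T^[n] x₀) hx hij he⟩
      · exact ⟨_, RectBMetric.fixed_of_repeat hs hφ0 hMK (fun n => T^[n] x₀) hx hij he.symm⟩
  obtain ⟨z, hz⟩ := hfix
  exact ⟨z, hz, hMK.phi_eq_zero hs hφ0 hz, fun w hw => hMK.fixed_unique hs hφ0 hw hz⟩
end

section
/- Let (X,d) be a complete b-rectangular metric space with coefficient s ≥ 1, T : X → X a mapping, φ : X → [0,∞) a lower semicontinuous function, ψ an altering distance function, ϕ ∈ Φ_u, F a C-class function, and assume that for all x, y ∈ X, ψ(s²d(Tx,Ty) + φ(Tx) + φ(Ty)) ≤ F(ψ(M(x,y)), ϕ(M(x,y))), where M(x,y) = max{d(x,y)+φ(x)+φ(y), d(x,Tx)+φ(x)+φ(Tx), d(y,Ty)+φ(y)+φ(Ty)}. Let x₀ ∈ X and define x_{n+1} = Tx_n for all n ∈ ℕ, and assume x_n ≠ x_{n+1} for all n. Then lim_{n→∞} [d(x_n,x_{n+1}) + φ(x_n)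 + φ(x_{n+1})] = 0; in particular lim_{n→∞} d(x_n,x_{n+1}) = 0 and lim_{n→∞} φ(x_n) = 0. -/
/-!
Put `a n = d (x n) (x (n+1)) + φ (x n) + φ (x (n+1))`, which is positive. Since
`M (x n) (x (n+1)) = max (a n) (a (n+1))` and `1 ≤ s ^ 2`, the contraction hypothesis gives
`ψ (a (n+1)) ≤ F (ψ m) (ϕ m)` with `m = max (a n) (a (n+1))`. An inequality
`ψ t ≤ F (ψ t) (ϕ t)` is impossible for `t > 0` (`eq_zero_of_psi_le`). Taking `t = a (n+1)` shows
that `a` is decreasing, and then passing to the limit `r` of `a` gives `ψ r ≤ F (ψ r) (ϕ r)`, so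
`r = 0` (`tendsto_zero_of_contraction`). The two other limits follow by squeezing.
-/

open Filter Topology

lemma eq_zero_of_psi_le {ψ ϕ : ℝ → ℝ} {F : ℝ → ℝ → ℝ} (hψ : AlteringDistance ψ)
    (hϕ : PhiU ϕ) (hF : CClass F) {t : ℝ} (ht : 0 ≤ t) (h : ψ t ≤ F (ψ t) (ϕ t)) : t = 0 := by
  by_contra hne
  have htpos : 0 < t := lt_of_le_of_ne ht (Ne.symm hne)
  have hϕt := hϕ.2.1 t htpos
  have hψt := hψ.2.2.1 t ht
  rcases hF.2.2 _ _ hψt hϕt.le (le_antisymm (hF.2.1 _ _ hψt hϕt.le) h) with h0 | h0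
  · exact hne ((hψ.2.2.2 t ht).1 h0)
  · exact hϕt.ne' h0

/-- The real-sequence core of the argument, free of the metric structure. -/
lemma tendsto_zero_of_contraction {ψ ϕ : ℝ → ℝ} {F : ℝ → ℝ → ℝ} (hψ : AlteringDistance ψ)
    (hϕ : PhiU ϕ) (hF : CClass F) {a : ℕ → ℝ} (ha : ∀ n, 0 < a n)
    (h : ∀ n, ψ (a (n + 1)) ≤ F (ψ (max (a n) (a (n + 1)))) (ϕ (max (a n) (a (n + 1))))) :
    Tendsto a atTop (𝓝 0) := by
  have hlt : ∀ n, a (n + 1) < a n := by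
    intro n
    by_contra! hle
    have h1 := h n
    rw [max_eq_right hle] at h1
    exact (ha (n + 1)).ne' (eq_zero_of_psi_le hψ hϕ hF (ha (n + 1)).le h1)
  have hstep : ∀ n, ψ (a (n + 1)) ≤ F (ψ (a n)) (ϕ (a n)) := by
    intro n
    have h1 := h n
    rwa [max_eq_left (hlt n).le] at h1
  have hbdd : BddBelow (Set.range a) := ⟨0, by rintro _ ⟨n, rfl⟩; exact (ha n).le⟩
  have hlim := tendsto_atTop_ciInf (antitone_nat_of_succ_le fun n => (hlt n).le) hbdd
  have hr0 : 0 ≤ ⨅ n, a n := le_ciInf fun n => (ha n).le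
  generalize (⨅ n, a n) = r at hlim hr0
  have hϕnn : ∀ t, 0 ≤ t → 0 ≤ ϕ t := fun t ht => by
    rcases ht.eq_or_lt with rfl | ht
    · exact hϕ.2.2
    · exact (hϕ.2.1 t ht).le
  -- `ψ`, `ϕ` and `F` are continuous only on the nonnegative range, so limits are taken within it.
  have hlimW : Tendsto a atTop (𝓝[Set.Ici 0] r) :=
    tendsto_nhdsWithin_iff.2 ⟨hlim, Eventually.of_forall fun n => (ha n).le⟩
  have hψl : Tendsto (fun n => ψ (a n)) atTop (𝓝 (ψ r)) := (hψ.1 r hr0).tendsto.comp hlimW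
  have hϕl : Tendsto (fun n => ϕ (a n)) atTop (𝓝 (ϕ r)) := (hϕ.1 r hr0).tendsto.comp hlimW
  have hpair : Tendsto (fun n => (ψ (a n), ϕ (a n))) atTop
      (𝓝[Set.Ici 0 ×ˢ Set.Ici 0] (ψ r, ϕ r)) :=
    tendsto_nhdsWithin_iff.2 ⟨hψl.prodMk_nhds hϕl,
      Eventually.of_forall fun n => ⟨hψ.2.2.1 _ (ha n).le, hϕnn _ (ha n).le⟩⟩
  have hFl : Tendsto (fun n => F (ψ (a n)) (ϕ (a n))) atTop (𝓝 (F (ψ r) (ϕ r))) :=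
    (hF.1 (ψ r, ϕ r) ⟨hψ.2.2.1 r hr0, hϕnn r hr0⟩).tendsto.comp hpair
  have hle : ψ r ≤ F (ψ r) (ϕ r) :=
    le_of_tendsto_of_tendsto' (hψl.comp (tendsto_add_atTop_nat 1)) hFl hstep
  rwa [eq_zero_of_psi_le hψ hϕ hF hr0 hle] at hlim

theorem stmt7 {X : Type*} [Nonempty X] {s : ℝ} (hs : 1 ≤ s) (B : RectBMetric X s)
    (hcomp : B.Complete) (T : X → X) (φ : X → ℝ) (hφ0 : ∀ x, 0 ≤ φ x)
    (hφ : B.LSC φ) (ψ ϕ : ℝ → ℝ) (F : ℝ → ℝ → ℝ)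
    (hψ : AlteringDistance ψ) (hϕ : PhiU ϕ) (hF : CClass F)
    (hcontr : ∀ x y : X,
      ψ (s ^ 2 * B.d (T x) (T y) + φ (T x) + φ (T y)) ≤
        F (ψ (B.Mfun T φ x y)) (ϕ (B.Mfun T φ x y)))
    (x : ℕ → X) (hrec : ∀ n : ℕ, x (n + 1) = T (x n))
    (hne : ∀ n : ℕ, x n ≠ x (n + 1)) :
    Filter.Tendsto (fun n => B.d (x n) (x (n + 1)) + φ (x n) + φ (x (n + 1)))
        Filter.atTop (nhds 0) ∧
      Filter.Tendsto (fun n => B.d (x n) (x (n + 1))) Filter.atTop (nhds 0) ∧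
      Filter.Tendsto (fun n => φ (x n)) Filter.atTop (nhds 0) := by
  have hd : ∀ n, 0 < B.d (x n) (x (n + 1)) := fun n =>
    lt_of_le_of_ne (B.nonneg _ _) fun h => hne n ((B.eq_iff _ _).1 h.symm)
  have main : Tendsto (fun n => B.d (x n) (x (n + 1)) + φ (x n) + φ (x (n + 1)))
      atTop (𝓝 0) := by
    refine tendsto_zero_of_contraction hψ hϕ hF
      (fun n => by linarith [hd n, hφ0 (x n), hφ0 (x (n + 1))]) fun n => ?_
    have hM : B.Mfun T φ (x n) (x (n + 1)) =
        max (B.d (x n) (x (n + 1)) + φ (x n) + φ (x (n + 1)))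
          (B.d (x (n + 1)) (x (n + 1 + 1)) + φ (x (n + 1)) + φ (x (n + 1 + 1))) := by
      rw [RectBMetric.Mfun, ← hrec, ← hrec, ← max_assoc, max_self]
    have hc := hcontr (x n) (x (n + 1))
    rw [hM, ← hrec, ← hrec] at hc
    refine le_trans (hψ.2.1 ?_ ?_ ?_) hc
    · have := hd (n + 1)
      have := hφ0 (x (n + 1))
      have := hφ0 (x (n + 1 + 1))
      simp only [Set.mem_Ici]
      positivity
    · have := hd (n + 1)
      have := hφ0 (x (n + 1))
      have := hφ0 (x (n + 1 + 1))
      simp only [Set.mem_Ici]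
      positivity
    · have := le_mul_of_one_le_left (hd (n + 1)).le (one_le_pow₀ hs (n := 2))
      linarith
  refine ⟨main, squeeze_zero (fun n => (hd n).le) (fun n => ?_) main,
    squeeze_zero (fun n => hφ0 _) (fun n => ?_) main⟩ <;>
  linarith [hd n, hφ0 (x n), hφ0 (x (n + 1))]
end

section
/- Let (X,d) be a complete b-rectangular metric space with coefficient s ≥ 1, T : X → X a mapping, φ : X → [0,∞) a lower semicontinuous function, ψ an altering distance function, ϕ ∈ Φ_u, F a C-class function, and assume that for all x, y ∈ X, ψ(s²d(Tx,Ty) + φ(Tx) + φ(Ty)) ≤ F(ψ(M(x,y)), ϕ(M(x,y))), where M(x,y) = max{d(x,y)+φ(x)+φ(y), d(x,Tx)+φ(x)+φ(Tx), d(y,Ty)+φ(y)+φ(Ty)}. Let x₀ ∈ X and define x_{n+1} = Tx_n for all n ∈ ℕ, and assume that x_n ≠ x_m for all n ≠ m. Then the sequence (x_n) is a Cauchy sequence in (X,d). -/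
/-!
The C-class inequality is used only through a Meir-Keeler type consequence
(`exists_gap` and `contraction_gap`): for every `L > 0` there is `δ > 0` such that
`L ≤ s² d(Tx,Ty) + φ(Tx) + φ(Ty)` forces `L + δ < M(x,y)`.

Put `a n = d(xₙ,xₙ₊₁) + φ(xₙ) + φ(xₙ₊₁)` and `b n = d(xₙ,xₙ₊₂) + φ(xₙ) + φ(xₙ₊₂)`.
The gap makes `a` and then `max a b` decreasing, and no positive limit `L` is possible, since
the gap at `L` would keep the sequence above `L + δ` (`small_of_gap`).

For the Cauchy property, fix `ε > 0` and a large `n`, and suppose `d(xₘ,xₙ) < ε` while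
`d(xₘ₊₁,xₙ) ≥ ε`. The rectangular inequality along `xₘ, xₙ, xₙ₊₁, xₙ₋₁` bounds `d(xₘ,xₙ₋₁)` by
`s ε` up to a small error, hence `M(xₘ,xₙ₋₁) ≤ s² ε + δ`, contradicting the gap at `L = s² ε`.
Thus `d(xₘ,xₙ) < ε` for all `m ≥ n` by induction on `m`.
-/

open Filter Topology

/-- Below `L` the strict inequality comes from the C-class property and monotonicity of `ψ`;
continuity at `L` extends it slightly beyond `L`. -/
lemma exists_gap {ψ ϕ : ℝ → ℝ} {F : ℝ → ℝ → ℝ} (hψ : AlteringDistance ψ) (hϕ : PhiU ϕ)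
    (hF : CClass F) {L : ℝ} (hL : 0 < L) :
    ∃ δ > 0, ∀ M, 0 ≤ M → M ≤ L + δ → F (ψ M) (ϕ M) < ψ L := by
  obtain ⟨hψc, hψm, hψ0, hψz⟩ := hψ
  obtain ⟨hϕc, hϕp, hϕ0⟩ := hϕ
  obtain ⟨hFc, hFle, hFeq⟩ := hF
  have hϕn : ∀ t, 0 ≤ t → 0 ≤ ϕ t := fun t ht => by
    rcases ht.eq_or_lt with rfl | h
    · exact hϕ0
    · exact (hϕp t h).le
  have hψp : ∀ t, 0 < t → 0 < ψ t := fun t ht =>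
    lt_of_le_of_ne (hψ0 t ht.le) fun h => ht.ne' ((hψz t ht.le).1 h.symm)
  have below : ∀ M, 0 ≤ M → M ≤ L → F (ψ M) (ϕ M) < ψ L := by
    intro M hM hML
    have h1 := hFle (ψ M) (ϕ M) (hψ0 M hM) (hϕn M hM)
    rcases hM.eq_or_lt with rfl | hM'
    · have := (hψz 0 le_rfl).2 rfl
      linarith [hψp L hL]
    · refine lt_of_lt_of_le (lt_of_le_of_ne h1 fun h => ?_) (hψm hM hL.le hML)
      rcases hFeq _ _ (hψ0 M hM) (hϕn M hM) h with h | h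
      · exact (hψp M hM').ne' h
      · exact (hϕp M hM').ne' h
  have hg : ContinuousOn (fun t => F (ψ t) (ϕ t)) (Set.Ici 0) :=
    hFc.comp (hψc.prodMk hϕc) fun t ht => ⟨hψ0 t ht, hϕn t ht⟩
  have hev : ∀ᶠ t in 𝓝[Set.Ici 0] L, F (ψ t) (ϕ t) < ψ L :=
    (hg L hL.le).eventually_lt_const (below L hL.le le_rfl)
  obtain ⟨δ, hδ, hball⟩ := Metric.mem_nhdsWithin_iff.1 hev
  refine ⟨δ / 2, half_pos hδ, fun M hM hML => ?_⟩
  rcases le_or_gt M L with h | h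
  · exact below M hM h
  · refine hball ⟨?_, hM⟩
    rw [Metric.mem_ball, Real.dist_eq, abs_lt]
    constructor <;> linarith

/-- A decreasing nonnegative sequence with a Meir-Keeler gap at every positive level becomes
arbitrarily small. -/
lemma small_of_gap {c : ℕ → ℝ} (hc : Antitone c) (hc0 : ∀ n, 0 ≤ c n)
    (hgap : ∀ L > 0, ∃ δ > 0, ∃ N, ∀ n ≥ N, L ≤ c (n + 1) → L + δ < c n) :
    ∀ ε > 0, ∃ N, ∀ n ≥ N, c n < ε := by
  have hbdd : BddBelow (Set.range c) := ⟨0, by rintro _ ⟨n, rfl⟩; exact hc0 n⟩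
  have hlim := tendsto_atTop_ciInf hc hbdd
  have hz : (⨅ n, c n) = 0 := by
    by_contra hne
    have hpos : 0 < ⨅ n, c n := lt_of_le_of_ne (le_ciInf hc0) (Ne.symm hne)
    obtain ⟨δ, hδ, N, hN⟩ := hgap _ hpos
    obtain ⟨n, h1, h2⟩ := ((hlim.eventually_lt_const (lt_add_of_pos_right _ hδ)).and
      (eventually_ge_atTop N)).exists
    exact lt_asymm h1 (hN n h2 (ciInf_le hbdd (n + 1)))
  rw [hz] at hlim
  intro ε hε
  exact eventually_atTop.1 (hlim.eventually_lt_const hε)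

lemma RectBMetric.Mfun_nonneg {X : Type*} {s : ℝ} (B : RectBMetric X s) (T : X → X) {φ : X → ℝ}
    (hφ0 : ∀ x, 0 ≤ φ x) (x y : X) : 0 ≤ B.Mfun T φ x y :=
  le_max_of_le_left (by linarith [B.nonneg x y, hφ0 x, hφ0 y])

lemma contraction_gap {X : Type*} {s : ℝ} {B : RectBMetric X s} {T : X → X} {φ : X → ℝ}
    (hφ0 : ∀ x, 0 ≤ φ x) {ψ ϕ : ℝ → ℝ} {F : ℝ → ℝ → ℝ}
    (hψ : AlteringDistance ψ) (hϕ : PhiU ϕ) (hF : CClass F)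
    (hcontr : ∀ x y : X,
      ψ (s ^ 2 * B.d (T x) (T y) + φ (T x) + φ (T y)) ≤
        F (ψ (B.Mfun T φ x y)) (ϕ (B.Mfun T φ x y))) {L : ℝ} (hL : 0 < L) :
    ∃ δ > 0, ∀ x y, L ≤ s ^ 2 * B.d (T x) (T y) + φ (T x) + φ (T y) →
      L + δ < B.Mfun T φ x y := by
  obtain ⟨δ, hδ, h⟩ := exists_gap hψ hϕ hF hL
  refine ⟨δ, hδ, fun x y hxy => ?_⟩
  by_contra! hM
  exact absurd ((hψ.2.1 hL.le (hL.le.trans hxy) hxy).trans (hcontr x y))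
    (not_le.2 (h _ (B.Mfun_nonneg T hφ0 x y) hM))

theorem stmt8 {X : Type*} [Nonempty X] {s : ℝ} (hs : 1 ≤ s) (B : RectBMetric X s)
    (hcomp : B.Complete) (T : X → X) (φ : X → ℝ) (hφ0 : ∀ x, 0 ≤ φ x)
    (hφ : B.LSC φ) (ψ ϕ : ℝ → ℝ) (F : ℝ → ℝ → ℝ)
    (hψ : AlteringDistance ψ) (hϕ : PhiU ϕ) (hF : CClass F)
    (hcontr : ∀ x y : X,
      ψ (s ^ 2 * B.d (T x) (T y) + φ (T x) + φ (T y)) ≤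
        F (ψ (B.Mfun T φ x y)) (ϕ (B.Mfun T φ x y)))
    (x : ℕ → X) (hrec : ∀ n : ℕ, x (n + 1) = T (x n))
    (hinj : ∀ m n : ℕ, m ≠ n → x m ≠ x n) :
    B.IsCauchySeq x := by
  have gap := fun L (hL : (0:ℝ) < L) => contraction_gap hφ0 hψ hϕ hF hcontr hL
  have hs2 : 1 ≤ s ^ 2 := one_le_pow₀ hs
  have dpos : ∀ m n, m ≠ n → 0 < B.d (x m) (x n) := fun m n h =>
    lt_of_le_of_ne (B.nonneg _ _) fun h' => hinj m n h ((B.eq_iff _ _).1 h'.symm)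
  -- `D m n` is the perturbed distance `d + φ + φ` along the orbit.
  obtain ⟨D, hD⟩ : ∃ D : ℕ → ℕ → ℝ, ∀ m n, D m n = B.d (x m) (x n) + φ (x m) + φ (x n) :=
    ⟨_, fun _ _ => rfl⟩
  have hM : ∀ m n, B.Mfun T φ (x m) (x n) = max (D m n) (max (D m (m + 1)) (D n (n + 1))) := by
    intro m n
    simp only [RectBMetric.Mfun, hD, hrec]
  have hDle : ∀ m n, D m n ≤ s ^ 2 * B.d (x m) (x n) + φ (x m) + φ (x n) := by
    intro m n
    rw [hD]
    nlinarith [B.nonneg (x m) (x n)]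
  have hD0 : ∀ m n, m ≠ n → 0 < D m n := by
    intro m n h
    rw [hD]
    linarith [dpos m n h, hφ0 (x m), hφ0 (x n)]
  have gapS : ∀ L > 0, ∃ δ > 0, ∀ m n,
      L ≤ s ^ 2 * B.d (x (m + 1)) (x (n + 1)) + φ (x (m + 1)) + φ (x (n + 1)) →
      L + δ < max (D m n) (max (D m (m + 1)) (D n (n + 1))) := by
    intro L hL
    obtain ⟨δ, hδ, h⟩ := gap L hL
    refine ⟨δ, hδ, fun m n hmn => ?_⟩
    rw [← hM]
    apply h
    rwa [← hrec, ← hrec]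
  have step : ∀ m n, m ≠ n →
      D (m + 1) (n + 1) < max (D m n) (max (D m (m + 1)) (D n (n + 1))) := by
    intro m n hmn
    obtain ⟨δ, hδ, h⟩ := gapS _ (hD0 (m + 1) (n + 1) (by omega))
    linarith [h m n (hDle _ _)]
  have ha1 : ∀ n, D (n + 1) (n + 1 + 1) < D n (n + 1) := by
    intro n
    have := step n (n + 1) (by omega)
    rcases lt_max_iff.1 this with h | h
    · exact h
    · exact (lt_max_iff.1 h).resolve_right (lt_irrefl _)
  have ha : Antitone fun n => D n (n + 1) := antitone_nat_of_succ_le fun n => (ha1 n).le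
  have hasmall : ∀ ε > 0, ∃ N, ∀ n ≥ N, D n (n + 1) < ε := by
    refine small_of_gap ha (fun n => (hD0 _ _ (by omega)).le) fun L hL => ?_
    obtain ⟨δ, hδ, h⟩ := gapS L hL
    refine ⟨δ, hδ, 0, fun n _ hn => ?_⟩
    have := h n (n + 1) (hn.trans (hDle _ _))
    rwa [max_eq_left (ha1 n).le, max_self] at this
  have hM2 : ∀ n, max (D n (n + 2)) (max (D n (n + 1)) (D (n + 2) (n + 2 + 1))) =
      max (D n (n + 1)) (D n (n + 2)) := by
    intro n
    rw [max_eq_left (ha (show n ≤ n + 2 by omega)), max_comm]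
  have hc : Antitone fun n => max (D n (n + 1)) (D n (n + 2)) := by
    refine antitone_nat_of_succ_le fun n => max_le (le_max_of_le_left (ha1 n).le) ?_
    exact (step n (n + 2) (by omega)).le.trans (hM2 n).le
  have hcsmall : ∀ ε > 0, ∃ N, ∀ n ≥ N, max (D n (n + 1)) (D n (n + 2)) < ε := by
    refine small_of_gap hc (fun n => le_max_of_le_left (hD0 _ _ (by omega)).le) fun L hL => ?_
    obtain ⟨δ, hδ, h⟩ := gapS L hL
    obtain ⟨N, hN⟩ := hasmall L hL
    refine ⟨δ, hδ, N, fun n hn hLn => ?_⟩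
    -- Past `N` the first entry of the maximum is below `L`, so the second one carries the bound.
    have hb : L ≤ D (n + 1) (n + 2 + 1) :=
      (le_max_iff.1 hLn).resolve_left (not_le.2 (hN (n + 1) (by omega)))
    exact (h n (n + 2) (hb.trans (hDle _ _))).trans_le (hM2 n).le
  intro ε hε
  obtain ⟨δ, hδ, hgap⟩ := gapS (s ^ 2 * ε) (by positivity)
  -- The total error in the estimate of `M` is at most `2 s η + 2 η ≤ 4 s η ≤ δ`.
  obtain ⟨η, hη, hηε, hηδ⟩ : ∃ η > 0, η ≤ ε ∧ 4 * s * η ≤ δ := by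
    refine ⟨min ε (δ / (4 * s)), by positivity, min_le_left _ _, ?_⟩
    have h1 : min ε (δ / (4 * s)) ≤ δ / (4 * s) := min_le_right _ _
    rw [le_div_iff₀ (by positivity)] at h1
    linarith
  obtain ⟨N, hN⟩ := hcsmall η hη
  have hN1 : ∀ n ≥ N, D n (n + 1) < η := fun n hn => (le_max_left _ _).trans_lt (hN n hn)
  have hN2 : ∀ n ≥ N, D n (n + 2) < η := fun n hn => (le_max_right _ _).trans_lt (hN n hn)
  have hφN : ∀ n ≥ N, φ (x n) < η := by
    intro n hn
    have := hN1 n hn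
    rw [hD] at this
    linarith [B.nonneg (x n) (x (n + 1)), hφ0 (x n), hφ0 (x (n + 1))]
  have key : ∀ n ≥ N, ∀ m ≥ n + 1, B.d (x m) (x (n + 1)) < ε := by
    intro n hn m hm
    induction m, hm using Nat.le_induction with
    | base => rw [(B.eq_iff _ _).2 rfl]; exact hε
    | succ m hm ih =>
      rcases Nat.lt_or_ge m (n + 3) with hlt | hge
      · obtain rfl | rfl : m = n + 1 ∨ m = n + 2 := by omega
        · have := hN1 (n + 1) (by omega)
          rw [hD] at this
          rw [B.symm]
          linarith [hφ0 (x (n + 1)), hφ0 (x (n + 1 + 1))]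
        · have := hN2 (n + 1) (by omega)
          rw [hD] at this
          rw [B.symm]
          have h3 : n + 2 + 1 = n + 1 + 2 := by omega
          rw [h3]
          linarith [hφ0 (x (n + 1)), hφ0 (x (n + 1 + 2))]
      · by_contra! hcon
        have hbig := hgap m n (by nlinarith [hφ0 (x (m + 1)), hφ0 (x (n + 1))])
        have hrect := B.rect (x m) (x n) (x (n + 1)) (x (n + 2))
          (hinj _ _ (by omega)) (hinj _ _ (by omega)) (hinj _ _ (by omega))
          (hinj _ _ (by omega)) (hinj _ _ (by omega))
        have h1 := hN1 (n + 1) (by omega)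
        have h2 := hN2 n hn
        rw [hD] at h1 h2
        have hd1 : B.d (x (n + 1)) (x (n + 2)) < η := by
          linarith [hφ0 (x (n + 1)), hφ0 (x (n + 1 + 1))]
        have hd2 : B.d (x (n + 2)) (x n) < η := by
          rw [B.symm]
          linarith [hφ0 (x n), hφ0 (x (n + 2))]
        have hbd : B.d (x m) (x n) ≤ s * (ε + η + η) :=
          hrect.trans (mul_le_mul_of_nonneg_left (by linarith) (by linarith))
        have hsε : s * ε ≤ s ^ 2 * ε := by nlinarith [mul_pos (show 0 < s by linarith) hε]
        have hsη : η ≤ s * η := by nlinarith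
        have hεs : ε ≤ s ^ 2 * ε := by nlinarith
        refine absurd hbig (not_lt.2 (max_le ?_ (max_le ?_ ?_)))
        · rw [hD]
          linarith [hφN m (by omega), hφN n hn]
        · linarith [hN1 m (by omega)]
        · linarith [hN1 n hn]
  refine ⟨N + 1, fun m hm n hn => ?_⟩
  rcases le_total n m with h | h
  · obtain ⟨k, rfl⟩ : ∃ k, n = k + 1 := ⟨n - 1, by omega⟩
    exact key k (by omega) m h
  · obtain ⟨k, rfl⟩ : ∃ k, m = k + 1 := ⟨m - 1, by omega⟩
    rw [B.symm]
    exact key k (by omega) n h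
end

section
/- Let (X,d) be a complete b-rectangular metric space with coefficient s ≥ 1, T : X → X a mapping, and φ : X → [0,∞) a lower semicontinuous function. Suppose there exists α ∈ (0,1/2) such that for all x, y ∈ X, s²d(Tx,Ty) + φ(Tx) + φ(Ty) ≤ α[d(x,Tx) + φ(x) + φ(Tx) + d(y,Ty) + φ(y) + φ(Ty)]. Then T has a unique fixed point. -/
/-!
Write `a x = d x (T x) + φ x + φ (T x)`. The contraction condition at `(x, T x)` gives
`a (T x) ≤ α / (1 - α) * a x`, so `a` tends to `0` along every orbit `x n` of `T`, while at
`(x n, x m)` it bounds `d (x (n+1)) (x (m+1))` by `α * (a (x n) + a (x m))`. Thus orbits are Cauchy,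
without any use of the rectangular inequality. Let `z` be the limit of an orbit; lower
semicontinuity yields `φ z = 0`.

If `T` had no fixed point, `a` would be positive everywhere, so the orbit would eventually avoid both
`z` and `T z`, where `a` has a positive value. The rectangular inequality through `x n, x (n+1)`
then applies, and with the contraction condition at `(x n, z)` it gives in the limit
`s * d z (T z) + φ (T z) ≤ α * a z`, which forces `d z (T z) = 0`: a contradiction.

Uniqueness: `φ` vanishes at fixed points, so the contraction condition at two fixed points
reads `s ^ 2 * d z w ≤ 0`.
-/

open Filter Topology

theorem stmt10 {X : Type*} [Nonempty X] {s : ℝ} (hs : 1 ≤ s) (B : RectBMetric X s)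
    (hcomp : B.Complete) (T : X → X) (φ : X → ℝ) (hφ0 : ∀ x, 0 ≤ φ x)
    (hφ : B.LSC φ) (α : ℝ) (hα0 : 0 < α) (hα1 : α < 1 / 2)
    (hcontr : ∀ x y : X,
      s ^ 2 * B.d (T x) (T y) + φ (T x) + φ (T y) ≤
        α * (B.d x (T x) + φ x + φ (T x) + B.d y (T y) + φ y + φ (T y))) :
    ∃! z : X, T z = z := by
  have hself : ∀ x, B.d x x = 0 := fun x => (B.eq_iff x x).2 rfl
  have hs2 : 1 ≤ s ^ 2 := one_le_pow₀ hs
  have hle : ∀ x y, B.d x y ≤ s ^ 2 * B.d x y := fun x y =>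
    le_mul_of_one_le_left (B.nonneg x y) hs2
  have hφfix : ∀ z, T z = z → φ z = 0 := by
    intro z hz
    have h := hcontr z z
    rw [hz, hself] at h
    nlinarith [hφ0 z]
  suffices hex : ∃ z, T z = z by
    obtain ⟨z, hz⟩ := hex
    refine ⟨z, hz, fun w (hw : T w = w) => ?_⟩
    have h := hcontr w z
    rw [hz, hw, hself, hself, hφfix z hz, hφfix w hw] at h
    exact (B.eq_iff w z).1 (le_antisymm (by linarith [hle w z]) (B.nonneg w z))
  by_contra! hno
  set a : X → ℝ := fun x => B.d x (T x) + φ x + φ (T x) with ha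
  have hc : ∀ x y, s ^ 2 * B.d (T x) (T y) + φ (T x) + φ (T y) ≤ α * (a x + a y) := by
    intro x y
    have h := hcontr x y
    simp only [ha]
    linarith
  have hapos : ∀ x, 0 < a x := by
    intro x
    have h1 : B.d x (T x) ≠ 0 := fun h => hno x ((B.eq_iff _ _).1 h).symm
    have h2 := lt_of_le_of_ne (B.nonneg x (T x)) h1.symm
    simp only [ha]
    linarith [hφ0 x, hφ0 (T x)]
  have hα' : 0 < 1 - α := by linarith
  have hstep : ∀ x, a (T x) ≤ α / (1 - α) * a x := by
    intro x
    have h1 : a (T x) ≤ α * (a x + a (T x)) := by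
      have h := hc x (T x)
      have h2 := hle (T x) (T (T x))
      have h3 : a (T x) = B.d (T x) (T (T x)) + φ (T x) + φ (T (T x)) := rfl
      linarith
    rw [div_mul_eq_mul_div, le_div_iff₀ hα']
    linarith
  obtain ⟨x₀⟩ := ‹Nonempty X›
  set x : ℕ → X := fun n => T^[n] x₀ with hx
  have hxs : ∀ n, x (n + 1) = T (x n) := fun n => Function.iterate_succ_apply' T n x₀
  have hk0 : 0 ≤ α / (1 - α) := by positivity
  have hk1 : α / (1 - α) < 1 := by
    rw [div_lt_one hα']
    linarith
  have hageom : ∀ n, a (x n) ≤ (α / (1 - α)) ^ n * a x₀ := by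
    intro n
    induction n with
    | zero => simp [hx]
    | succ n ih =>
      rw [hxs, pow_succ']
      calc a (T (x n)) ≤ α / (1 - α) * a (x n) := hstep _
        _ ≤ α / (1 - α) * ((α / (1 - α)) ^ n * a x₀) := mul_le_mul_of_nonneg_left ih hk0
        _ = _ := by ring
  have hat : Tendsto (fun n => a (x n)) atTop (𝓝 0) := by
    refine squeeze_zero (fun n => (hapos _).le) hageom ?_
    simpa using (tendsto_pow_atTop_nhds_zero_of_lt_one hk0 hk1).mul_const (a x₀)
  have hcau : B.IsCauchySeq x := by
    intro ε hε
    obtain ⟨N, hN⟩ := eventually_atTop.1 (hat.eventually_lt_const hε)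
    refine ⟨N + 1, fun m hm n hn => ?_⟩
    obtain ⟨m, rfl⟩ : ∃ j, m = j + 1 := ⟨m - 1, by omega⟩
    obtain ⟨n, rfl⟩ : ∃ j, n = j + 1 := ⟨n - 1, by omega⟩
    rw [hxs, hxs]
    have h1 := hN m (by omega)
    have h2 := hN n (by omega)
    have h3 := hc (x m) (x n)
    have h4 := hle (T (x m)) (T (x n))
    nlinarith [hφ0 (T (x m)), hφ0 (T (x n))]
  obtain ⟨z, hz⟩ := hcomp x hcau
  have hφx : Tendsto (fun n => φ (x n)) atTop (𝓝 0) := by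
    refine squeeze_zero (fun n => hφ0 _) (fun n => ?_) hat
    simp only [ha]
    linarith [B.nonneg (x n) (T (x n)), hφ0 (T (x n))]
  have hφz : φ z = 0 := by
    have h := hφ x z hz
    rw [hφx.liminf_eq] at h
    exact le_antisymm h (hφ0 z)
  -- The values of `a` separate late orbit points from any given point.
  have hne : ∀ y, ∀ᶠ n in atTop, x n ≠ y := by
    intro y
    filter_upwards [hat.eventually_lt_const (hapos y)] with n hn h
    rw [h] at hn
    exact lt_irrefl _ hn
  have hev : ∀ᶠ n in atTop, s * B.d z (T z) + φ (T z) ≤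
      s ^ 2 * (B.d (x n) z + a (x n)) + α * (a (x n) + a z) := by
    filter_upwards [hne z, hne (T z), (tendsto_add_atTop_nat 1).eventually (hne z),
      (tendsto_add_atTop_nat 1).eventually (hne (T z))] with n h1 h2 h3 h4
    rw [hxs] at h3 h4
    have hr := B.rect z (T z) (x n) (T (x n)) (hno _).symm h1 h2 h3 h4
    rw [B.symm z (x n)] at hr
    have h5 := mul_le_mul_of_nonneg_left hr (by linarith : 0 ≤ s)
    have h6 := hc (x n) z
    have h7 : B.d (x n) (T (x n)) ≤ a (x n) := by
      simp only [ha]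
      linarith [hφ0 (x n), hφ0 (T (x n))]
    have h8 := mul_le_mul_of_nonneg_left h7 (by linarith : 0 ≤ s ^ 2)
    linarith [hφ0 (T (x n))]
  have hlim : Tendsto (fun n => s ^ 2 * (B.d (x n) z + a (x n)) + α * (a (x n) + a z)) atTop
      (𝓝 (s ^ 2 * (0 + 0) + α * (0 + a z))) :=
    ((Tendsto.add hz hat).const_mul _).add ((hat.add_const _).const_mul _)
  have hfin := ge_of_tendsto hlim hev
  have haz : a z = B.d z (T z) + φ (T z) := by
    simp only [ha]
    linarith
  have hpos := hapos z
  have hsd := le_mul_of_one_le_left (B.nonneg z (T z)) hs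
  nlinarith
end

section
/- Let (X,d) be a complete b-rectangular metric space with coefficient s ≥ 1, T : X → X a mapping, and φ : X → [0,∞) a lower semicontinuous function. Suppose there exists λ ∈ (0,1/3) such that for all x, y ∈ X, s²d(Tx,Ty) + φ(Tx) + φ(Ty) ≤ λ[d(x,y) + φ(x) + φ(y) + d(x,Tx) + φ(x) + φ(Tx) + d(y,Ty) + φ(y) + φ(Ty)]. Then T has a unique fixed point. -/
/-!
For a point `x` write `c x = d(x, Tx) + φ x + φ (Tx)` (`orbitGap`). The contraction condition at
the pair `(x, Tx)` gives `c (Tx) ≤ q * c x` with `q = 2λ / (1 - λ) < 1`, because `λ < 1/3`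
(`orbitGap_step`). Hence `c` decays geometrically along every orbit, and if `T` had no fixed point
every orbit would be injective, since a repetition would force `c` to vanish at some point.

The Cauchy property needs no summation of the gaps. If `x`, `y`, `Tx`, `Ty` are in general
position, the rectangular inequality through `Tx`, `Ty` bounds `d(x, y)` by
`s * (d(x, Tx) + d(Tx, Ty) + d(Ty, y))`, and the contraction condition bounds `s² d(Tx, Ty)` by
`λ d(x, y)` plus multiples of `c x` and `c y`. Absorbing `λ d(x, y)` yields
`(1 - λ) * d(x, y) ≤ (s + 2) * (c x + c y)` (`dist_le_orbitGap`).

So an orbit without fixed points converges to some `z`, with `φ z = 0` by lower semicontinuity.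
The rectangular inequality for `z`, `Tz` through two consecutive orbit points, combined with the
contraction condition, gives `(s - λ) * d(z, Tz) ≤ 0`, so `z` is fixed after all. Uniqueness is the
contraction condition at two fixed points.
-/

open Filter Topology

namespace RectBMetric

variable {X : Type*} {s : ℝ}

/-- The quantity `d(x, Tx) + φ x + φ (Tx)`, which controls both the displacement of `x` under `T`
and the value of `φ` at `x`. -/
def orbitGap (B : RectBMetric X s) (T : X → X) (φ : X → ℝ) (x : X) : ℝ :=
  B.d x (T x) + φ x + φ (T x)

/-- The contraction hypothesis on `T`, with the last six terms on the right grouped into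
`orbitGap`s. -/
def Contr (B : RectBMetric X s) (T : X → X) (φ : X → ℝ) (lam : ℝ) : Prop :=
  ∀ x y : X, s ^ 2 * B.d (T x) (T y) + φ (T x) + φ (T y) ≤
    lam * (B.d x y + φ x + φ y + B.orbitGap T φ x + B.orbitGap T φ y)

variable {B : RectBMetric X s} {T : X → X} {φ : X → ℝ} {lam : ℝ}

lemma orbitGap_nonneg (hφ0 : ∀ x, 0 ≤ φ x) (x : X) : 0 ≤ B.orbitGap T φ x := by
  have := B.nonneg x (T x)
  have := hφ0 x
  have := hφ0 (T x)
  unfold orbitGap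
  linarith

lemma orbitGap_step (hs : 1 ≤ s) (hl1 : lam < 1 / 3) (hc : B.Contr T φ lam) (x : X) :
    B.orbitGap T φ (T x) ≤ 2 * lam / (1 - lam) * B.orbitGap T φ x := by
  have h := hc x (T x)
  have hd := B.nonneg (T x) (T (T x))
  have hsd : B.d (T x) (T (T x)) ≤ s ^ 2 * B.d (T x) (T (T x)) :=
    le_mul_of_one_le_left hd (by nlinarith)
  rw [div_mul_eq_mul_div, le_div_iff₀ (by linarith)]
  unfold orbitGap at *
  linarith

lemma orbitGap_iterate (hs : 1 ≤ s) (hl0 : 0 < lam) (hl1 : lam < 1 / 3) (hc : B.Contr T φ lam)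
    (x : X) (n : ℕ) :
    B.orbitGap T φ (T^[n] x) ≤ (2 * lam / (1 - lam)) ^ n * B.orbitGap T φ x := by
  have hq : 0 ≤ 2 * lam / (1 - lam) := div_nonneg (by linarith) (by linarith)
  induction n with
  | zero => simp
  | succ n ih =>
    rw [Function.iterate_succ_apply', pow_succ', mul_assoc]
    exact (orbitGap_step hs hl1 hc _).trans (mul_le_mul_of_nonneg_left ih hq)

lemma ratio_lt_one (hl1 : lam < 1 / 3) : 2 * lam / (1 - lam) < 1 := by
  rw [div_lt_one (by linarith)]
  linarith

lemma tendsto_orbitGap (hs : 1 ≤ s) (hφ0 : ∀ x, 0 ≤ φ x) (hl0 : 0 < lam) (hl1 : lam < 1 / 3)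
    (hc : B.Contr T φ lam) (x : X) :
    Tendsto (fun n => B.orbitGap T φ (T^[n] x)) atTop (𝓝 0) := by
  have hq : 0 ≤ 2 * lam / (1 - lam) := div_nonneg (by linarith) (by linarith)
  have h := (tendsto_pow_atTop_nhds_zero_of_lt_one hq (ratio_lt_one hl1)).mul_const
    (B.orbitGap T φ x)
  rw [zero_mul] at h
  exact squeeze_zero (fun n => orbitGap_nonneg hφ0 _) (orbitGap_iterate hs hl0 hl1 hc x) h

/-- If `T` has no fixed point, its orbits are injective: `orbitGap` is positive everywhere and
strictly decreases along an orbit. -/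
lemma iterate_injective (hs : 1 ≤ s) (hφ0 : ∀ x, 0 ≤ φ x) (hl1 : lam < 1 / 3)
    (hc : B.Contr T φ lam) (hfix : ∀ z, T z ≠ z) (x : X) :
    Function.Injective (fun n => T^[n] x) := by
  have hpos : ∀ y, 0 < B.orbitGap T φ y := fun y => by
    have hd : 0 < B.d y (T y) :=
      (B.nonneg _ _).lt_of_ne fun h => hfix y ((B.eq_iff _ _).1 h.symm).symm
    have := hφ0 y
    have := hφ0 (T y)
    unfold orbitGap
    linarith
  have hanti : StrictAnti (fun n => B.orbitGap T φ (T^[n] x)) := by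
    refine strictAnti_nat_of_succ_lt fun n => ?_
    rw [Function.iterate_succ_apply']
    exact (orbitGap_step hs hl1 hc _).trans_lt (mul_lt_of_lt_one_left (hpos _) (ratio_lt_one hl1))
  exact fun m n h => hanti.injective (congrArg (B.orbitGap T φ) h)

lemma dist_le_orbitGap (hs : 1 ≤ s) (hφ0 : ∀ x, 0 ≤ φ x) (hl0 : 0 < lam) (hl1 : lam < 1 / 3)
    (hc : B.Contr T φ lam) {x y : X} (h1 : T x ≠ T y) (h2 : T x ≠ x) (h3 : T x ≠ y)
    (h4 : T y ≠ x) (h5 : T y ≠ y) :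
    (1 - lam) * B.d x y ≤ (s + 2) * (B.orbitGap T φ x + B.orbitGap T φ y) := by
  have hr := B.rect x y (T x) (T y) h1 h2 h3 h4 h5
  rw [B.symm (T y) y] at hr
  have hxy := hc x y
  have hd := B.nonneg x y
  have hdx := B.nonneg x (T x)
  have hdy := B.nonneg y (T y)
  have hx := hφ0 x
  have hy := hφ0 y
  have hTx := hφ0 (T x)
  have hTy := hφ0 (T y)
  have hD := B.nonneg (T x) (T y)
  have hsD : s * B.d (T x) (T y) ≤ s ^ 2 * B.d (T x) (T y) :=
    mul_le_mul_of_nonneg_right (by nlinarith) hD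
  have hgx : B.d x (T x) ≤ B.orbitGap T φ x := by unfold orbitGap; linarith
  have hgy : B.d y (T y) ≤ B.orbitGap T φ y := by unfold orbitGap; linarith
  have hfx : φ x ≤ B.orbitGap T φ x := by unfold orbitGap; linarith
  have hfy : φ y ≤ B.orbitGap T φ y := by unfold orbitGap; linarith
  have hs1 : s * (B.d x (T x) + B.d y (T y)) ≤
      s * (B.orbitGap T φ x + B.orbitGap T φ y) :=
    mul_le_mul_of_nonneg_left (by linarith) (by linarith)
  have hl : lam * (φ x + φ y + B.orbitGap T φ x + B.orbitGap T φ y) ≤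
      1 * (φ x + φ y + B.orbitGap T φ x + B.orbitGap T φ y) :=
    mul_le_mul_of_nonneg_right (by linarith) (by linarith)
  linarith

lemma isCauchySeq_iterate (hs : 1 ≤ s) (hφ0 : ∀ x, 0 ≤ φ x) (hl0 : 0 < lam) (hl1 : lam < 1 / 3)
    (hc : B.Contr T φ lam) (hfix : ∀ z, T z ≠ z) (x : X) :
    B.IsCauchySeq (fun n => T^[n] x) := by
  have hinj := iterate_injective hs hφ0 hl1 hc hfix x
  have hne : ∀ m n, m ≠ n → T^[m] x ≠ T^[n] x := fun m n hmn h => hmn (hinj h)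
  have key : ∀ m n, (1 - lam) * B.d (T^[m] x) (T^[n] x) ≤
      (s + 2) * (B.orbitGap T φ (T^[m] x) + B.orbitGap T φ (T^[n] x)) := by
    intro m n
    have hm := orbitGap_nonneg (B := B) (T := T) hφ0 (T^[m] x)
    have hn := orbitGap_nonneg (B := B) (T := T) hφ0 (T^[n] x)
    -- For adjacent points the four-point inequality degenerates, but `d ≤ orbitGap` suffices.
    have hadj : ∀ y, B.d y (T y) ≤ B.orbitGap T φ y := fun y => by
      have := hφ0 y
      have := hφ0 (T y)
      unfold orbitGap
      linarith
    have hsmall : B.d (T^[m] x) (T^[n] x) ≤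
        B.orbitGap T φ (T^[m] x) + B.orbitGap T φ (T^[n] x) →
        (1 - lam) * B.d (T^[m] x) (T^[n] x) ≤
        (s + 2) * (B.orbitGap T φ (T^[m] x) + B.orbitGap T φ (T^[n] x)) := fun h =>
      mul_le_mul (by linarith) h (B.nonneg _ _) (by linarith)
    by_cases h0 : m = n
    · refine hsmall ?_
      rw [(B.eq_iff _ _).2 (by rw [h0])]
      linarith
    by_cases h1 : n = m + 1
    · refine hsmall ?_
      have := hadj (T^[m] x)
      rw [← Function.iterate_succ_apply' T, Nat.succ_eq_add_one, ← h1] at this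
      linarith
    by_cases h2 : m = n + 1
    · refine hsmall ?_
      have := hadj (T^[n] x)
      rw [← Function.iterate_succ_apply' T, Nat.succ_eq_add_one, ← h2, B.symm] at this
      linarith
    apply dist_le_orbitGap hs hφ0 hl0 hl1 hc <;>
      simp only [← Function.iterate_succ_apply'] <;> apply hne <;> omega
  intro ε hε
  have hδ : 0 < (1 - lam) * ε / (2 * (s + 2)) := by
    have : 0 < 1 - lam := by linarith
    positivity
  obtain ⟨N, hN⟩ := eventually_atTop.1
    ((tendsto_orbitGap hs hφ0 hl0 hl1 hc x).eventually (gt_mem_nhds hδ))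
  refine ⟨N, fun m hm n hn => ?_⟩
  have h1 := hN m hm
  have h2 := hN n hn
  rw [lt_div_iff₀ (by linarith)] at h1 h2
  have h3 := key m n
  exact lt_of_mul_lt_mul_left (a := 1 - lam) (by linarith) (by linarith)

/-- A limit of an orbit of a fixed-point-free `T` is a fixed point of `T`. -/
lemma map_eq_of_tendsto (hs : 1 ≤ s) (hφ0 : ∀ x, 0 ≤ φ x) (hφ : B.LSC φ) (hl0 : 0 < lam)
    (hl1 : lam < 1 / 3) (hc : B.Contr T φ lam) (hfix : ∀ z, T z ≠ z) {x z : X}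
    (hz : B.TendstoSeq (fun n => T^[n] x) z) : T z = z := by
  have hinj := iterate_injective hs hφ0 hl1 hc hfix x
  have hgap := tendsto_orbitGap hs hφ0 hl0 hl1 hc x
  have hφgap : ∀ y, φ y ≤ B.orbitGap T φ y := fun y => by
    have := hφ0 (T y)
    have := B.nonneg y (T y)
    unfold orbitGap
    linarith
  have hφz : φ z = 0 := by
    have h := hφ _ _ hz
    rw [(squeeze_zero (fun n => hφ0 _) (fun n => hφgap _) hgap).liminf_eq] at h
    exact le_antisymm h (hφ0 z)
  have hne : ∀ a, ∀ᶠ n in atTop, T^[n] x ≠ a := fun a => by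
    rw [← Nat.cofinite_eq_atTop]
    exact hinj.tendsto_cofinite.eventually (eventually_cofinite_ne a)
  have hbound : ∀ᶠ n in atTop, (s - lam) * B.d z (T z) ≤
      (s ^ 2 + 1) * B.d (T^[n] x) z + (s ^ 2 + 2) * B.orbitGap T φ (T^[n] x) := by
    filter_upwards [hne z, hne (T z), (tendsto_add_atTop_nat 1).eventually (hne z),
      (tendsto_add_atTop_nat 1).eventually (hne (T z))] with n h1 h2 h3 h4
    rw [Function.iterate_succ_apply'] at h3 h4
    set y := T^[n] x
    have hr := B.rect z (T z) y (T y) (hfix y).symm h1 h2 h3 h4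
    have hyz := hc y z
    have hgz : B.orbitGap T φ z = B.d z (T z) + φ z + φ (T z) := rfl
    rw [hgz, hφz] at hyz
    rw [B.symm z y] at hr
    have hd1 := B.nonneg y z
    have hd2 := B.nonneg y (T y)
    have hTy := hφ0 (T y)
    have hTz := hφ0 (T z)
    have hy := hφgap y
    have hy0 := hφ0 y
    have hg : B.d y (T y) ≤ B.orbitGap T φ y := by unfold orbitGap; linarith
    have hr' : s * B.d z (T z) ≤
        s ^ 2 * (B.d y z + B.d y (T y) + B.d (T y) (T z)) := by
      have := mul_le_mul_of_nonneg_left hr (by linarith : 0 ≤ s)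
      linarith
    have hs2 : s ^ 2 * B.d y (T y) ≤ s ^ 2 * B.orbitGap T φ y :=
      mul_le_mul_of_nonneg_left hg (sq_nonneg s)
    have hl : lam * (B.d y z + φ y + B.orbitGap T φ y) ≤
        1 * (B.d y z + φ y + B.orbitGap T φ y) :=
      mul_le_mul_of_nonneg_right (by linarith) (by linarith)
    have hlz : lam * φ (T z) ≤ 1 * φ (T z) := mul_le_mul_of_nonneg_right (by linarith) hTz
    linarith
  have hlim : Tendsto (fun n => (s ^ 2 + 1) * B.d (T^[n] x) z +
      (s ^ 2 + 2) * B.orbitGap T φ (T^[n] x)) atTop (𝓝 0) := by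
    have h := (Tendsto.const_mul (s ^ 2 + 1) hz).add (hgap.const_mul (s ^ 2 + 2))
    simpa using h
  have hle : (s - lam) * B.d z (T z) ≤ 0 := ge_of_tendsto hlim hbound
  have hd0 : B.d z (T z) = 0 :=
    le_antisymm (nonpos_of_mul_nonpos_right hle (by linarith)) (B.nonneg _ _)
  exact ((B.eq_iff _ _).1 hd0).symm

end RectBMetric

theorem stmt11 {X : Type*} [Nonempty X] {s : ℝ} (hs : 1 ≤ s) (B : RectBMetric X s)
    (hcomp : B.Complete) (T : X → X) (φ : X → ℝ) (hφ0 : ∀ x, 0 ≤ φ x)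
    (hφ : B.LSC φ) (lam : ℝ) (hl0 : 0 < lam) (hl1 : lam < 1 / 3)
    (hcontr : ∀ x y : X,
      s ^ 2 * B.d (T x) (T y) + φ (T x) + φ (T y) ≤
        lam * (B.d x y + φ x + φ y + B.d x (T x) + φ x + φ (T x)
          + B.d y (T y) + φ y + φ (T y))) :
    ∃! z : X, T z = z := by
  have hc : B.Contr T φ lam := fun x y => by
    have h := hcontr x y
    unfold RectBMetric.orbitGap
    linarith
  have hex : ∃ z, T z = z := by
    by_contra! hfix
    obtain ⟨x⟩ := ‹Nonempty X›
    obtain ⟨z, hz⟩ := hcomp _ (RectBMetric.isCauchySeq_iterate hs hφ0 hl0 hl1 hc hfix x)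
    exact hfix z (RectBMetric.map_eq_of_tendsto hs hφ0 hφ hl0 hl1 hc hfix hz)
  obtain ⟨z, hz⟩ := hex
  refine ⟨z, hz, fun w hw => ?_⟩
  change T w = w at hw
  have h := hcontr w z
  rw [hw, hz, (B.eq_iff w w).2 rfl, (B.eq_iff z z).2 rfl] at h
  have hd := B.nonneg w z
  have hsd : B.d w z ≤ s ^ 2 * B.d w z := le_mul_of_one_le_left hd (by nlinarith)
  -- At fixed points the right-hand side is `λ (d + 3 φ w + 3 φ z)`, and `3 λ < 1`.
  have hφs : 3 * lam * (φ w + φ z) ≤ 1 * (φ w + φ z) :=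
    mul_le_mul_of_nonneg_right (by linarith) (add_nonneg (hφ0 w) (hφ0 z))
  have hle : (1 - lam) * B.d w z ≤ 0 := by linarith
  exact (B.eq_iff _ _).1 (le_antisymm (nonpos_of_mul_nonpos_right hle (by linarith)) hd)
end
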